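/- arXiv:0712.0576 — 3 statements merged into one kernel-verified Lean document; each statement's English description precedes it below -/
import Mathlib

section
/- Let α > 0 and let ρ be a nonzero σ-finite measure on (0,∞) with ∫₀^∞ (y^{α−δ} ∨ y^{α+δ}) ρ(dy) < ∞ for some δ > 0 and ∫₀^∞ y^{α+iθ} ρ(dy) ≠ 0 for all θ ∈ ℝ. Suppose ν is a σ-finite measure on (0,∞) such that ν⊛ρ has a regularly varying tail with exponent α and lim_{b↓0} limsup_{x→∞} (∫₀^b ρ(x/y,∞) ν(dy)) / ((ν⊛ρ)(x,∞)) = 0. Then ν has a regularly varying tail with exponent α and lim_{x→∞} (ν⊛ρ)(x,∞) / ν(x,∞) = ∫₀^∞ y^α ρ(dy). -/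
open MeasureTheory Set Filter ProbabilityTheory
open scoped ENNReal Topology

noncomputable section

/-- Multiplicative convolution of two measures (on `(0,∞)`, modeled as measures on `ℝ`):
`(ν ⊛ ρ)(B) = ∫ ν(x⁻¹ B) ρ(dx)`. -/
def mulConv (ν ρ : Measure ℝ) : Measure ℝ :=
  ρ.bind fun x => ν.map fun y => x * y

/-- The measure `ν_α` on `(0,∞)`, with density `|α| x^{-(α+1)}` w.r.t. Lebesgue measure
when `α ≠ 0`, and density `x⁻¹` when `α = 0`. -/
def nuAlpha (α : ℝ) : Measure ℝ :=
  (volume.restrict (Ioi (0:ℝ))).withDensity fun x =>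
    ENNReal.ofReal (if α = 0 then x⁻¹ else |α| * x ^ (-(α + 1)))

/-- `L` is slowly varying at infinity: `L(cx)/L(x) → 1` as `x → ∞`, for every `c > 0`. -/
def SlowlyVarying (L : ℝ → ℝ) : Prop :=
  ∀ c : ℝ, 0 < c → Tendsto (fun x => L (c * x) / L x) atTop (nhds 1)

/-- The measure `μ` has a regularly varying (right) tail with exponent `α`:
`μ(x,∞) = x^{-α} L(x)` for all `x > 0`, where `L` is slowly varying
(and eventually positive) at infinity. -/
def HasRegVarTail (μ : Measure ℝ) (α : ℝ) : Prop :=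
  ∃ L : ℝ → ℝ, SlowlyVarying L ∧ (∀ᶠ x in atTop, 0 < L x) ∧
    ∀ x : ℝ, 0 < x → μ (Ioi x) = ENNReal.ofReal (x ^ (-α) * L x)

/-- The moment condition `∫₀^∞ (y^{α-δ} ∨ y^{α+δ}) ρ(dy) < ∞`. -/
def MomentCond (ρ : Measure ℝ) (α δ : ℝ) : Prop :=
  ∫⁻ y in Ioi (0:ℝ), ENNReal.ofReal (max (y ^ (α - δ)) (y ^ (α + δ))) ∂ρ < ⊤

/-- The nonvanishing condition `∫₀^∞ y^{α+iθ} ρ(dy) ≠ 0` for all `θ ∈ ℝ`. -/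
def MellinNonvanishing (ρ : Measure ℝ) (α : ℝ) : Prop :=
  ∀ θ : ℝ, (∫ y in Ioi (0:ℝ), (y : ℂ) ^ ((α : ℂ) + (θ : ℂ) * Complex.I) ∂ρ) ≠ 0

/-- `ρ` has the cancellation property with respect to `{ν_α}`: for every σ-finite
measure `ν` on `(0,∞)`, `ν ⊛ ρ = ν_α ⊛ ρ` implies `ν = ν_α`. -/
def HasCancellation (ρ : Measure ℝ) (α : ℝ) : Prop :=
  ∀ ν : Measure ℝ, SigmaFinite ν → ν (Iic 0) = 0 →
    mulConv ν ρ = mulConv (nuAlpha α) ρ → ν = nuAlpha α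

/-- Condition (2.18): `lim_{b↓0} limsup_{x→∞} (∫₀^b ρ(x/y,∞) ν(dy)) / ((ν⊛ρ)(x,∞)) = 0`. -/
def Cond218 (ν ρ : Measure ℝ) : Prop :=
  Tendsto (fun b : ℝ =>
      limsup (fun x : ℝ =>
        (∫⁻ y in Ioc (0:ℝ) b, ρ (Ioi (x / y)) ∂ν).toReal
          / ((mulConv ν ρ) (Ioi x)).toReal) atTop)
    (nhdsWithin 0 (Ioi 0)) (nhds 0)

/-!
In logarithmic coordinates the theorem becomes an additive Tauberian statement. Write
`U t = e^(α t) ν(e^t, ∞)`, `G t = e^(α t) (ν ⊛ ρ)(e^t, ∞)`, and let `m` be the image under `log` of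
`y ^ α ρ(dy)`. Then `G` is the convolution of `U` with `m`, `G` is slowly varying in the sense that
`G (t + s) / G t → 1`, the measure `m` has exponential moments, and its characteristic function is
the Mellin transform of `ρ` along `Re = α`, hence has no zero. The goal is
`U t / G t → 1 / m(ℝ)`; both conclusions follow from this.

Reduction to a truncated `ν`. Potter's bound (`potter`) for `G` and Markov's inequality for `ρ` give
`ρ(x, ∞) = o((ν ⊛ ρ)(x, ∞))` (`tail_ratio_zero`). Together with the condition on the mass of `ν`
near zero, this shows that the part of `ν` on `(0, 1]` contributes negligibly to `(ν ⊛ ρ)(x, ∞)`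
(`low_part_zero`), so `ν` may be replaced by the finite measure `ν.restrict (Ioi 1)`. For that
measure `U` is bounded on `(-∞, 0]`.

The Tauberian step (`core`). Since `e^(-α t) U t` is decreasing, `U ≤ C₀ G(· + a)` for some `a`, and
Potter's bound yields `U (t + s) / G t ≤ B e^(δ |s|)` uniformly in large `t` (`exp_bound`). The
truncations `D t s = min (U (t + s) / G t) C` are therefore bounded, and by dominated convergence
their convolution with `m` tends to `1` pointwise. Wiener's argument (`wiener_tendsto`) turns this
into `∫ D t · 𝓕 h → h 0 / m(ℝ)` for every smooth compactly supported `h`: dividing `h` by the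
nonvanishing smooth characteristic function of `m` shows that `𝓕 h` is a correlation of `m` with a
Schwartz function. Choosing `h` such that `𝓕 h` is a probability density concentrated near a
prescribed point (`exists_kernel`) and using the monotonicity of `e^(-α t) U t` on either side of
`t` squeezes `U t / G t` towards `1 / m(ℝ)`.
-/

/-! ### Kernels with compactly supported Fourier transform -/

open FourierTransform Convolution in
/-- There are probability densities on `ℝ` which have a smooth compactly supported inverse Fourier
transform and put all but `η` of their mass within distance `r` of `c`. They are dilates and
translates of the Fejér-like kernel `(𝓕 k) ^ 2 = 𝓕 (k ⋆ k)`, where `k` is an even bump function. -/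
lemma exists_kernel {η r : ℝ} (hη : 0 < η) (hr : 0 < r) (c : ℝ) :
    ∃ (h : ℝ → ℂ) (φ : ℝ → ℝ), ContDiff ℝ ((⊤ : ℕ∞) : WithTop ℕ∞) h ∧ HasCompactSupport h ∧ h 0 = 1 ∧
      (∀ x, 0 ≤ φ x) ∧ Integrable φ ∧ (∀ x, 𝓕 h x = (φ x : ℂ)) ∧ ∫ x, φ x = 1 ∧
      ∫ x in {x | r ≤ |x - c|}, φ x ≤ η := by
  let b : ContDiffBump (0 : ℝ) := ⟨1, 2, by norm_num, by norm_num⟩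
  let k : ℝ → ℂ := fun x => (b x : ℂ)
  have hkc : HasCompactSupport k := b.hasCompactSupport.comp_left (g := fun x : ℝ => (x : ℂ)) (by simp)
  have hks : ContDiff ℝ ((⊤ : ℕ∞) : WithTop ℕ∞) k := Complex.ofRealCLM.contDiff.comp b.contDiff
  have hki : Integrable k := hks.continuous.integrable_of_hasCompactSupport hkc
  let h0 : ℝ → ℂ := k ⋆[ContinuousLinearMap.mul ℂ ℂ] k
  have h0c : HasCompactSupport h0 := hkc.convolution _ hkc
  have h0s : ContDiff ℝ ((⊤ : ℕ∞) : WithTop ℕ∞) h0 := by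
    have := hkc.contDiff_convolution_left (μ := volume) (ContinuousLinearMap.mul ℝ ℂ) hks
      hki.locallyIntegrable
    exact this
  have hFk : ∀ x, 𝓕 k x = ((𝓕 k x).re : ℂ) := by
    intro x
    refine (Complex.conj_eq_iff_re.mp ?_).symm
    rw [Real.fourier_eq', ← integral_conj, ← integral_neg_eq_self]
    congr 1; ext v
    simp [k, b.neg, ← Complex.exp_conj, Complex.conj_ofNat]
  -- `𝓕 k` is real because `k` is real and even, so its square is nonnegative
  let q : ℝ → ℝ := fun x => (𝓕 k x).re ^ 2
  have hq : ∀ x, 𝓕 h0 x = (q x : ℂ) := by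
    intro x
    rw [Real.fourier_mul_convolution_eq hki hki, hFk x]
    simp [q, sq]
  let H0 : SchwartzMap ℝ ℂ := h0c.toSchwartzMap h0s
  have hH0 : (H0 : ℝ → ℂ) = h0 := by ext; simp [H0]
  have hFH : ∀ x, (𝓕 H0 : SchwartzMap ℝ ℂ) x = (q x : ℂ) := fun x => by
    rw [SchwartzMap.fourier_coe, hH0, hq]
  have hqi : Integrable q := by
    have := (𝓕 H0 : SchwartzMap ℝ ℂ).integrable (μ := volume)
    have h2 := this.re
    simp_rw [hFH] at h2
    simpa using h2
  have hq0 : ((∫ x, q x : ℝ) : ℂ) = h0 0 := by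
    have h1 : (𝓕⁻ (𝓕 H0) : SchwartzMap ℝ ℂ) 0 = h0 0 := by
      rw [FourierTransform.fourierInv_fourier_eq, hH0]
    rw [SchwartzMap.fourierInv_coe, Real.fourierInv_eq'] at h1
    simp_rw [hFH] at h1
    rw [← h1, ← integral_complex_ofReal]
    simp
  have hh0 : h0 0 = ((∫ x, b x ^ 2 : ℝ) : ℂ) := by
    simp only [h0, convolution_def, ContinuousLinearMap.mul_apply', zero_sub, k, b.neg]
    rw [← integral_complex_ofReal]
    congr 1; ext; push_cast; ring
  set A : ℝ := ∫ x, q x with hA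
  have hAb : A = ∫ x, b x ^ 2 := by exact_mod_cast hq0.trans hh0
  have hApos : 0 < A := by
    rw [hAb]
    have hbc : Continuous fun x => b x ^ 2 := b.continuous.pow 2
    refine hbc.integral_pos_of_hasCompactSupport_nonneg_nonzero (x := 0) ?_ (fun x => by positivity) ?_
    · exact b.hasCompactSupport.comp_left (g := fun x : ℝ => x ^ 2) (by simp)
    · have : b 0 = 1 := b.one_of_mem_closedBall (by simp [b])
      simp [this]
  -- choose the dilation factor `l` so that the tail of `q` beyond `l * r` is small
  have htail : Tendsto (fun l : ℝ => ∫ x, indicator {x | l * r ≤ |x|} q x) atTop (𝓝 0) := by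
    have : (0 : ℝ) = ∫ x : ℝ, (0 : ℝ) := by simp
    rw [this]
    refine tendsto_integral_filter_of_dominated_convergence (fun x => ‖q x‖) ?_ ?_ hqi.norm ?_
    · refine Eventually.of_forall fun l => ?_
      exact hqi.1.indicator (measurableSet_le measurable_const (by fun_prop))
    · exact Eventually.of_forall fun l => Eventually.of_forall fun x => norm_indicator_le_norm_self _ _
    · refine Eventually.of_forall fun x => ?_
      refine tendsto_const_nhds.congr' ?_
      filter_upwards [eventually_gt_atTop (|x| / r)] with l hl
      rw [indicator_of_notMem]
      simp only [mem_ofPred_eq, not_le]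
      rwa [div_lt_iff₀ hr] at hl
  obtain ⟨l, hl, hl0⟩ := ((htail.eventually_le_const (show (0:ℝ) < η * A by positivity)).and
    (eventually_gt_atTop 0)).exists
  have hl1 : (l : ℂ) ≠ 0 := by exact_mod_cast hl0.ne'
  have hchange : ∀ f : ℝ → ℝ, ∫ x, l / A * f (l * (x - c)) = (∫ x, f x) / A := by
    intro f
    rw [integral_const_mul, integral_sub_right_eq_self (fun x => f (l * x)) c,
      Measure.integral_comp_mul_left, abs_of_pos (inv_pos.2 hl0), smul_eq_mul]
    field_simp
  -- the phase factor in `h` translates the kernel to `c`, and `A` normalises its mass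
  refine ⟨fun ξ => Complex.exp ((2 * Real.pi * c * ξ : ℝ) * Complex.I) * h0 (l⁻¹ * ξ) / A,
    fun x => l / A * q (l * (x - c)), ?_, ?_, ?_, ?_, ?_, ?_, ?_, ?_⟩
  · refine ContDiff.div_const (ContDiff.mul ?_ (h0s.comp (by fun_prop))) _
    refine ContDiff.cexp (ContDiff.mul (Complex.ofRealCLM.contDiff.comp
      (contDiff_const.mul contDiff_id : ContDiff ℝ _ fun ξ : ℝ => 2 * Real.pi * c * ξ)) contDiff_const)
  · have : HasCompactSupport fun ξ => h0 (l⁻¹ * ξ) :=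
      h0c.comp_homeomorph (Homeomorph.mulLeft₀ l⁻¹ (inv_ne_zero hl0.ne'))
    refine this.mono' fun ξ hξ => subset_tsupport _ fun h0 => hξ (by simp [h0])
  · simp only [mul_zero, Complex.ofReal_zero, zero_mul, Complex.exp_zero, one_mul, ← hq0]
    exact div_self (by exact_mod_cast hApos.ne')
  · intro x; positivity
  · exact ((hqi.comp_mul_left' hl0.ne').comp_sub_right c).const_mul _
  · intro x
    push_cast
    rw [← hq, Real.fourier_eq', Real.fourier_eq']
    have e := Measure.integral_comp_mul_left (fun v : ℝ => 
      Complex.exp (↑(-2 * Real.pi * inner ℝ v (l * (x - c))) * Complex.I) • h0 v) l⁻¹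
    rw [inv_inv, abs_of_pos hl0] at e
    rw [div_mul_eq_mul_div, ← Complex.real_smul, ← e, ← integral_div]
    congr 1; ext v
    simp only [RCLike.inner_apply, conj_trivial, smul_eq_mul]
    rw [← mul_div_assoc, ← mul_assoc, ← Complex.exp_add]
    congr 3
    push_cast
    field_simp
    ring
  · rw [hchange, div_self hApos.ne']
  · have hS : MeasurableSet {x : ℝ | r ≤ |x - c|} := measurableSet_le measurable_const (by fun_prop)
    rw [← integral_indicator hS]
    have : ∀ x, indicator {x : ℝ | r ≤ |x - c|} (fun x => l / A * q (l * (x - c))) x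
        = l / A * indicator {x | l * r ≤ |x|} q (l * (x - c)) := by
      intro x
      simp only [indicator, mem_ofPred_eq, abs_mul, abs_of_pos hl0, mul_le_mul_iff_right₀ hl0]
      split_ifs <;> simp
    simp_rw [this]
    rw [hchange, div_le_iff₀ hApos]
    exact hl

/-! ### Wiener's argument -/

open FourierTransform in
/-- Wiener's argument for test functions with compactly supported smooth Fourier transform: a
uniformly bounded family `D t` whose convolution with `m` tends to `1` pointwise has the limiting
integral of the constant `1 / m(ℝ)` against `𝓕 h`, as `∫ 𝓕 h = h 0`. -/
lemma wiener_tendsto (m : Measure ℝ) [IsFiniteMeasure m] (hM : ContDiff ℝ ((⊤ : ℕ∞) : WithTop ℕ∞) (charFun m))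
    (hne : ∀ θ, charFun m θ ≠ 0) {h : ℝ → ℂ} (hs : ContDiff ℝ ((⊤ : ℕ∞) : WithTop ℕ∞) h) (hc : HasCompactSupport h)
    (D : ℝ → ℝ → ℝ) (C : ℝ) (hDm : ∀ t, Measurable (D t)) (hD : ∀ t s, |D t s| ≤ C)
    (hlim : ∀ s, Tendsto (fun t => ∫ r, D t (s - r) ∂m) atTop (𝓝 1)) :
    Tendsto (fun t => ∫ u, (D t u : ℂ) * 𝓕 h u) atTop (𝓝 (h 0 / (m.real univ : ℂ))) := by
  have hC : 0 ≤ C := (abs_nonneg _).trans (hD 0 0)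
  -- with this sign and scaling of the argument, correlating `𝓕 w` with `m` gives back `𝓕 h`
  set w : ℝ → ℂ := fun ξ => h ξ / charFun m (-(2 * Real.pi * ξ)) with hw
  have hwc : HasCompactSupport w := by
    refine hc.mono' ?_
    refine (fun ξ hξ => subset_tsupport _ ?_)
    intro h0
    exact hξ (by simp [hw, h0])
  have hws : ContDiff ℝ ((⊤ : ℕ∞) : WithTop ℕ∞) w := by
    simp only [hw, div_eq_mul_inv]
    exact hs.mul ((hM.comp (contDiff_const.mul contDiff_id).neg).inv fun ξ => hne _)
  let W : SchwartzMap ℝ ℂ := hwc.toSchwartzMap hws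
  have hWw : (W : ℝ → ℂ) = w := by ext; simp [W]
  let ψ : SchwartzMap ℝ ℂ := 𝓕 W
  have hψ : ∀ x, ψ x = 𝓕 w x := fun x => by
    change (𝓕 W : SchwartzMap ℝ ℂ) x = _
    rw [SchwartzMap.fourier_coe, hWw]
  have hψi : Integrable ψ := ψ.integrable
  have hwi : Integrable w := hWw ▸ W.integrable
  have hψm : Measurable ψ := ψ.continuous.measurable
  -- `𝓕 h` is the correlation of `ψ` with `m`, by Fubini and the choice of `w`
  have key1 : ∀ u, 𝓕 h u = ∫ r, ψ (u + r) ∂m := by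
    intro u
    simp_rw [hψ, Real.fourier_eq' w]
    rw [integral_integral_swap]
    · rw [Real.fourier_eq']
      congr 1; ext ξ
      have : ∀ r : ℝ, Complex.exp (↑(-2 * Real.pi * inner ℝ ξ (u + r)) * Complex.I) • w ξ
          = (Complex.exp (↑(-2 * Real.pi * inner ℝ ξ u) * Complex.I) * w ξ) *
            Complex.exp (((-(2 * Real.pi * ξ) : ℝ) : ℂ) * r * Complex.I) := by
        intro r
        simp only [RCLike.inner_apply, conj_trivial, smul_eq_mul]
        rw [mul_right_comm (Complex.exp _) (w ξ), ← Complex.exp_add]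
        congr 2
        push_cast; ring
      simp_rw [this]
      rw [integral_const_mul, ← charFun_apply_real, mul_assoc _ (w ξ),
        show w ξ * charFun m (-(2 * Real.pi * ξ)) = h ξ from div_mul_cancel₀ _ (hne _)]
      rfl
    · have : Integrable (fun p : ℝ × ℝ => w p.2) (m.prod volume) := hwi.comp_snd m
      refine this.mono ?_ ?_
      · simp only [Function.uncurry_def]
        exact AEStronglyMeasurable.smul (Continuous.aestronglyMeasurable
          (f := fun p : ℝ × ℝ => Complex.exp (↑(-2 * Real.pi * inner ℝ p.2 (u + p.1)) * Complex.I))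
          (by fun_prop)) this.1
      · refine Eventually.of_forall fun p => ?_
        simp only [Function.uncurry, norm_smul, Complex.norm_exp_ofReal_mul_I, one_mul, le_refl]
  have key2 : ∀ t, ∫ u, (D t u : ℂ) * 𝓕 h u = ∫ s, ((∫ r, D t (s - r) ∂m : ℝ) : ℂ) * ψ s := by
    intro t
    have hDc : Measurable fun u => (D t u : ℂ) := Complex.measurable_ofReal.comp (hDm t)
    simp_rw [key1]
    have e1 : ∀ u, (D t u : ℂ) * ∫ r, ψ (u + r) ∂m = ∫ r, (D t u : ℂ) * ψ (u + r) ∂m :=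
      fun u => (integral_const_mul _ _).symm
    simp_rw [e1]
    rw [integral_integral_swap]
    · have e2 : ∀ r, ∫ u, (D t u : ℂ) * ψ (u + r) = ∫ s, (D t (s - r) : ℂ) * ψ s := by
        intro r
        rw [← integral_sub_right_eq_self (fun u => (D t u : ℂ) * ψ (u + r)) r]
        simp
      simp_rw [e2]
      rw [integral_integral_swap]
      · congr 1; ext s
        rw [integral_mul_const, integral_complex_ofReal]
      · have : Integrable (fun p : ℝ × ℝ => (C : ℂ) * ψ p.2) (m.prod volume) :=
          (hψi.comp_snd m).const_mul _
        refine this.mono ?_ ?_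
        · refine Measurable.aestronglyMeasurable ?_
          simp only [Function.uncurry_def]
          exact (hDc.comp (by fun_prop)).mul (hψm.comp measurable_snd)
        · refine Eventually.of_forall fun p => ?_
          simp only [Function.uncurry, norm_mul, Complex.norm_real, Real.norm_eq_abs, abs_of_nonneg hC]
          exact mul_le_mul_of_nonneg_right (hD _ _) (norm_nonneg _)
    · have hi : Integrable (fun p : ℝ × ℝ => (C : ℂ) * ψ (p.1 + p.2)) (volume.prod m) := by
        refine Integrable.const_mul ?_ _
        rw [integrable_prod_iff' ]
        · refine ⟨Eventually.of_forall fun r => hψi.comp_add_right r, ?_⟩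
          have : ∀ r, ∫ x, ‖ψ (x + r)‖ = ∫ x, ‖ψ x‖ := fun r =>
            integral_add_right_eq_self (fun x => ‖ψ x‖) r
          simp_rw [this]
          exact integrable_const _
        · exact (hψm.comp (by fun_prop)).aestronglyMeasurable
      refine hi.mono ?_ ?_
      · refine Measurable.aestronglyMeasurable ?_
        simp only [Function.uncurry_def]
        exact (hDc.comp (by fun_prop)).mul (hψm.comp (by fun_prop))
      · refine Eventually.of_forall fun p => ?_
        simp only [Function.uncurry, norm_mul, Complex.norm_real, Real.norm_eq_abs, abs_of_nonneg hC]
        exact mul_le_mul_of_nonneg_right (hD _ _) (norm_nonneg _)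
  -- Fourier inversion at `0`
  have key3 : ∫ s, ψ s = h 0 / (m.real univ : ℂ) := by
    have h1 : (𝓕⁻ ψ : SchwartzMap ℝ ℂ) 0 = w 0 := by
      change (𝓕⁻ (𝓕 W) : SchwartzMap ℝ ℂ) 0 = w 0
      rw [FourierTransform.fourierInv_fourier_eq, hWw]
    rw [SchwartzMap.fourierInv_coe, Real.fourierInv_eq'] at h1
    simpa [hw] using h1
  simp_rw [key2]
  rw [← key3]
  refine tendsto_integral_filter_of_dominated_convergence
    (fun s => (C * m.real univ) * ‖ψ s‖) ?_ ?_ (hψi.norm.const_mul _) ?_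
  · refine Eventually.of_forall fun t => ?_
    refine AEStronglyMeasurable.mul ?_ hψi.1
    refine Complex.continuous_ofReal.comp_aestronglyMeasurable ?_
    have : StronglyMeasurable (fun p : ℝ × ℝ => D t (p.1 - p.2)) :=
      ((hDm t).comp (by fun_prop)).stronglyMeasurable
    exact this.integral_prod_right.aestronglyMeasurable
  · refine Eventually.of_forall fun t => Eventually.of_forall fun s => ?_
    rw [norm_mul, Complex.norm_real]
    refine mul_le_mul_of_nonneg_right ?_ (norm_nonneg _)
    exact norm_integral_le_of_norm_le_const (Eventually.of_forall fun r => hD _ _)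
  · refine Eventually.of_forall fun s => ?_
    have := ((Complex.continuous_ofReal.tendsto _).comp (hlim s)).mul_const (ψ s)
    simpa using this

/-! ### Potter bounds and domination -/

lemma shift_le {α : ℝ} {F : ℝ → ℝ} (hF : Antitone fun t => Real.exp (-(α * t)) * F t) (t : ℝ) {s : ℝ}
    (hs : 0 ≤ s) : F (t + s) ≤ Real.exp (α * s) * F t := by
  have h := hF (show t ≤ t + s by linarith)
  simp only at h
  have h2 := mul_le_mul_of_nonneg_left h (Real.exp_pos (α * (t + s))).le
  rw [← mul_assoc, ← mul_assoc, ← Real.exp_add, ← Real.exp_add] at h2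
  ring_nf at h2 ⊢
  simpa using h2

/-- Potter's bound in additive form: a function with `G (t + 1) / G t → 1` and at most exponential
growth between integer steps varies by a factor of at most `B e^(δ |s|)` over any displacement `s`
within `[T, ∞)`. -/
lemma potter {α δ : ℝ} (hα : 0 < α) (hδ : 0 < δ) {G : ℝ → ℝ} (hG0 : ∀ t, 0 ≤ G t)
    (hgrow : ∀ t s, 0 ≤ s → G (t + s) ≤ Real.exp (α * s) * G t)
    (hslow : Tendsto (fun t => G (t + 1) / G t) atTop (𝓝 1)) :
    ∃ T B : ℝ, 0 < B ∧ (∀ t ≥ T, 0 < G t) ∧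
      ∀ t ≥ T, ∀ t' ≥ T, G t' ≤ B * Real.exp (δ * |t' - t|) * G t := by
  have h1 : (1 : ℝ) < Real.exp δ := Real.one_lt_exp_iff.2 hδ
  have h2 : Real.exp (-δ) < 1 := by rw [Real.exp_lt_one_iff]; linarith
  obtain ⟨T, hT⟩ := eventually_atTop.1
    ((hslow.eventually_le_const h1).and (hslow.eventually_const_le h2))
  have hpos : ∀ t ≥ T, 0 < G t := by
    intro t ht
    refine (hG0 t).lt_of_ne' fun h0 => ?_
    -- division by zero makes the ratio `0`, which is below `e^(-δ)`
    have := (hT t ht).2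
    rw [h0, div_zero] at this
    exact absurd this (not_le.2 (Real.exp_pos _))
  have up : ∀ t ≥ T, G (t + 1) ≤ Real.exp δ * G t := fun t ht =>
    (div_le_iff₀ (hpos t ht)).1 (hT t ht).1
  have dn : ∀ t ≥ T, G t ≤ Real.exp δ * G (t + 1) := fun t ht => by
    have := (le_div_iff₀ (hpos t ht)).1 (hT t ht).2
    calc G t = Real.exp δ * (Real.exp (-δ) * G t) := by rw [← mul_assoc, ← Real.exp_add]; simp
      _ ≤ _ := by gcongr
  have upn : ∀ n : ℕ, ∀ t ≥ T, G (t + n) ≤ Real.exp (δ * n) * G t := by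
    intro n
    induction n with
    | zero => intro t ht; simp
    | succ n ih =>
      intro t ht
      have h0 : (0:ℝ) ≤ n := n.cast_nonneg
      calc G (t + (n + 1 : ℕ)) = G (t + n + 1) := by push_cast; ring_nf
        _ ≤ Real.exp δ * G (t + n) := up _ (by linarith)
        _ ≤ Real.exp δ * (Real.exp (δ * n) * G t) := by gcongr; exact ih t ht
        _ = _ := by
            rw [← mul_assoc, ← Real.exp_add]; push_cast; ring_nf
  have dnn : ∀ n : ℕ, ∀ t ≥ T, G t ≤ Real.exp (δ * n) * G (t + n) := by
    intro n
    induction n with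
    | zero => intro t ht; simp
    | succ n ih =>
      intro t ht
      have h0 : (0:ℝ) ≤ n := n.cast_nonneg
      calc G t ≤ Real.exp (δ * n) * G (t + n) := ih t ht
        _ ≤ Real.exp (δ * n) * (Real.exp δ * G (t + n + 1)) := by
            gcongr; exact dn _ (by linarith)
        _ = _ := by
            rw [← mul_assoc, ← Real.exp_add]; push_cast; ring_nf
  have h3 : ∀ t ≥ T, ∀ s ≥ 0, G (t + s) ≤ Real.exp (α + δ) * Real.exp (δ * s) * G t := by
    intro t ht s hs
    have hf := Nat.floor_le hs
    have hf2 := Nat.lt_floor_add_one s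
    calc G (t + s) = G (t + ⌊s⌋₊ + (s - ⌊s⌋₊)) := by ring_nf
      _ ≤ Real.exp (α * (s - ⌊s⌋₊)) * G (t + ⌊s⌋₊) := hgrow _ _ (by linarith)
      _ ≤ Real.exp (α + δ) * (Real.exp (δ * s) * G t) := by
          have e1 := (hpos t ht).le
          have e2 : G (t + ⌊s⌋₊) ≤ Real.exp (δ * s) * G t := (upn _ t ht).trans (by gcongr)
          have e3 : α * (s - ⌊s⌋₊) ≤ α + δ := by nlinarith
          exact mul_le_mul (Real.exp_le_exp.2 e3) e2 (hG0 _) (Real.exp_pos _).le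
      _ = _ := by ring
  have h4 : ∀ t ≥ T, ∀ s ≥ 0, G t ≤ Real.exp (α + δ) * Real.exp (δ * s) * G (t + s) := by
    intro t ht s hs
    have hf := Nat.le_ceil s
    have hf2 := Nat.ceil_lt_add_one hs
    calc G t ≤ Real.exp (δ * ⌈s⌉₊) * G (t + ⌈s⌉₊) := dnn _ t ht
      _ = Real.exp (δ * ⌈s⌉₊) * G (t + s + (⌈s⌉₊ - s)) := by ring_nf
      _ ≤ Real.exp (δ * (s + 1)) * (Real.exp (α * 1) * G (t + s)) := by
          have := hG0 (t + s)
          have e2 : G (t + s + (⌈s⌉₊ - s)) ≤ Real.exp (α * 1) * G (t + s) :=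
            (hgrow _ _ (by linarith)).trans (by gcongr; linarith)
          exact mul_le_mul (Real.exp_le_exp.2 (by gcongr)) e2 (hG0 _) (Real.exp_pos _).le
      _ = _ := by
          rw [← mul_assoc, ← Real.exp_add, ← Real.exp_add]; ring_nf
  refine ⟨T, Real.exp (α + δ), Real.exp_pos _, hpos, fun t ht t' ht' => ?_⟩
  rcases le_total t t' with h | h
  · have := h3 t ht (t' - t) (by linarith)
    rwa [abs_of_nonneg (by linarith), add_sub_cancel] at *
  · have := h4 t' ht' (t - t') (by linarith)
    rw [add_sub_cancel] at this
    rwa [abs_sub_comm, abs_of_nonneg (by linarith)]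

lemma exists_unit_interval (m : Measure ℝ) [IsFiniteMeasure m] (hm : m ≠ 0) :
    ∃ a : ℝ, 0 < m.real (Icc a (a + 1)) := by
  by_contra! H
  refine hm (Measure.measure_univ_eq_zero.1 ?_)
  have : (univ : Set ℝ) ⊆ ⋃ n : ℤ, Icc (n : ℝ) (n + 1) := fun x _ =>
    mem_iUnion.2 ⟨⌊x⌋, Int.floor_le x, (Int.lt_floor_add_one x).le⟩
  refine measure_mono_null this (measure_iUnion_null fun n => ?_)
  have := le_antisymm (H n) measureReal_nonneg
  rwa [measureReal_eq_zero_iff] at this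

/-- `U` is dominated by a shift of its convolution with `m`: on a unit interval charged by `m`, the
integrand `U (t + a - r)` is at least `e^(-α) U t`. -/
lemma le_conv {α : ℝ} (hα : 0 < α) (m : Measure ℝ) [IsFiniteMeasure m] (hm : m ≠ 0)
    {U : ℝ → ℝ} (hU0 : ∀ t, 0 ≤ U t) (hUanti : Antitone fun t => Real.exp (-(α * t)) * U t)
    (hint : ∀ t, Integrable (fun r => U (t - r)) m) :
    ∃ a C : ℝ, 0 < C ∧ ∀ t, U t ≤ C * ∫ r, U (t + a - r) ∂m := by
  obtain ⟨a, ha⟩ := exists_unit_interval m hm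
  refine ⟨a, Real.exp α / m.real (Icc a (a + 1)), by positivity, fun t => ?_⟩
  have key : ∫ r, indicator (Icc a (a + 1)) (fun _ => Real.exp (-α) * U t) r ∂m
      ≤ ∫ r, U (t + a - r) ∂m := by
    refine integral_mono ((integrable_const _).indicator measurableSet_Icc) (hint _) fun r => ?_
    by_cases hr : r ∈ Icc a (a + 1)
    · rw [indicator_of_mem hr]
      have h1 := shift_le hUanti (t + a - r) (s := r - a) (by linarith [hr.1])
      have h2 : t + a - r + (r - a) = t := by ring
      rw [h2] at h1
      calc Real.exp (-α) * U t ≤ Real.exp (-α) * (Real.exp (α * (r - a)) * U (t + a - r)) := by gcongr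
        _ ≤ Real.exp (-α) * (Real.exp α * U (t + a - r)) := by
            have := hU0 (t + a - r)
            gcongr
            nlinarith [hr.2]
        _ = U (t + a - r) := by rw [← mul_assoc, ← Real.exp_add]; simp
    · rw [indicator_of_notMem hr]; exact hU0 _
  rw [integral_indicator_const _ measurableSet_Icc, smul_eq_mul] at key
  calc U t = Real.exp α / m.real (Icc a (a + 1)) * (m.real (Icc a (a + 1)) * (Real.exp (-α) * U t)) := by
        rw [Real.exp_neg]; field_simp
    _ ≤ _ := by gcongr

/-- The domination `U (t + s) ≤ B e^(δ |s|) G t` holds for all `s`, uniformly in large `t`. Potter's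
bound covers large `t + s`; for the remaining `s`, `U (t + s)` is bounded and `e^(δ |s|) G t` is
bounded below. -/
lemma exp_bound {α δ K : ℝ} (hα : 0 < α) (hδ : 0 < δ) {U G : ℝ → ℝ} (hU0 : ∀ t, 0 ≤ U t)
    (hUanti : Antitone fun t => Real.exp (-(α * t)) * U t) (hK : ∀ t ≤ 0, U t ≤ K)
    (hG0 : ∀ t, 0 ≤ G t)
    (hgrow : ∀ t s, 0 ≤ s → G (t + s) ≤ Real.exp (α * s) * G t)
    (hslow : Tendsto (fun t => G (t + 1) / G t) atTop (𝓝 1))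
    {a C : ℝ} (hC : 0 < C) (hUG : ∀ t, U t ≤ C * G (t + a)) :
    ∃ T B : ℝ, 0 < B ∧ ∀ t ≥ T, 0 < G t ∧ ∀ s, U (t + s) ≤ B * Real.exp (δ * |s|) * G t := by
  obtain ⟨T, B, hB, hpos, hpot⟩ := potter hα hδ hG0 hgrow hslow
  set T' := T + |a| with hT'
  have hTT : T ≤ T' := by linarith [abs_nonneg a]
  have hGT : 0 < G T' := hpos _ hTT
  have hK0 : 0 ≤ K := (hU0 0).trans (hK 0 le_rfl)
  -- `U` is bounded on every left half-line
  have hUT : ∀ t ≤ T', U t ≤ Real.exp (α * |T'|) * K := by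
    intro t ht
    rcases le_total t 0 with h | h
    · refine (hK t h).trans ?_
      exact le_mul_of_one_le_left hK0 (Real.one_le_exp (by positivity))
    · have := shift_le hUanti 0 h
      rw [zero_add] at this
      refine this.trans ?_
      have h2 : t ≤ |T'| := ht.trans (le_abs_self _)
      have e1 := hK 0 le_rfl
      have e2 := hU0 0
      gcongr
  refine ⟨T', C * B * Real.exp (δ * |a|) + Real.exp (α * |T'|) * K * B / G T', by positivity,
    fun t ht => ⟨hpos t (hTT.trans ht), fun s => ?_⟩⟩
  have hGt := hpos t (hTT.trans ht)
  have e0 := Real.exp_pos (δ * |s|)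
  rw [add_mul, add_mul]
  rcases le_total T' (t + s) with h | h
  · refine le_add_of_le_of_nonneg ?_ (by positivity)
    calc U (t + s) ≤ C * G (t + s + a) := hUG _
      _ ≤ C * (B * Real.exp (δ * |t + s + a - t|) * G t) := by
          gcongr
          exact hpot t (hTT.trans ht) _ (by linarith [neg_abs_le a])
      _ ≤ C * (B * Real.exp (δ * (|a| + |s|)) * G t) := by
          gcongr
          rw [show t + s + a - t = a + s by ring]
          exact abs_add_le _ _
      _ = _ := by rw [mul_add, Real.exp_add]; ring
  · refine le_add_of_nonneg_of_le (by positivity) ?_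
    have h1 := hpot t (hTT.trans ht) T' hTT
    have h2 : |T' - t| ≤ |s| := by
      rw [abs_sub_comm, abs_of_nonneg (by linarith)]
      linarith [neg_abs_le s]
    calc U (t + s) ≤ Real.exp (α * |T'|) * K := hUT _ h
      _ = Real.exp (α * |T'|) * K / G T' * G T' := by field_simp
      _ ≤ Real.exp (α * |T'|) * K / G T' * (B * Real.exp (δ * |s|) * G t) := by
          gcongr
          exact h1.trans (by gcongr)
      _ = _ := by ring

lemma contDiff_charFun_of_exp {δ : ℝ} (hδ : 0 < δ) (m : Measure ℝ) [IsFiniteMeasure m]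
    (hexp : Integrable (fun r => Real.exp (δ * |r|)) m) : ContDiff ℝ ((⊤ : ℕ∞) : WithTop ℕ∞) (charFun m) := by
  refine contDiff_charFun' fun k => ?_
  have h0 : (0 : ℝ) ∈ interior (integrableExpSet id m) := by
    rw [mem_interior]
    refine ⟨Ioo (-δ) δ, fun t ht => ?_, isOpen_Ioo, by simp [hδ]⟩
    refine hexp.mono (by fun_prop) (Eventually.of_forall fun r => ?_)
    simp only [Real.norm_eq_abs, Real.abs_exp, id]
    refine Real.exp_le_exp.2 ((le_abs_self _).trans ?_)
    rw [abs_mul]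
    gcongr
    exact (abs_lt.2 ht).le
  exact_mod_cast memLp_of_mem_interior_integrableExpSet h0 k

/-! ### The additive Tauberian theorem -/

/-- The Tauberian theorem in additive coordinates. If `G` is the convolution of `U` with a finite
measure `m` having exponential moments and nonvanishing characteristic function, and
`G (t + s) / G t → 1` for all `s`, then `U t / G t → 1 / m(ℝ)`. The Tauberian condition is that
`e^(-α t) U t` is decreasing. -/
lemma core {α δ : ℝ} (hα : 0 < α) (hδ : 0 < δ) (m : Measure ℝ) [IsFiniteMeasure m]
    (hexp : Integrable (fun r => Real.exp (δ * |r|)) m) (hne : ∀ θ, charFun m θ ≠ 0)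
    {U G : ℝ → ℝ} (hU0 : ∀ t, 0 ≤ U t) (hUanti : Antitone fun t => Real.exp (-(α * t)) * U t)
    {K : ℝ} (hK : ∀ t ≤ 0, U t ≤ K)
    (hint : ∀ t, Integrable (fun r => U (t - r)) m) (hG : ∀ t, G t = ∫ r, U (t - r) ∂m)
    (hslow : ∀ s, Tendsto (fun t => G (t + s) / G t) atTop (𝓝 1)) :
    Tendsto (fun t => U t / G t) atTop (𝓝 (1 / m.real univ)) := by
  have hm : m ≠ 0 := by
    rintro rfl
    exact hne 0 (by simp)
  set M := m.real univ with hM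
  have hMpos : 0 < M := by
    have : NeZero m := ⟨hm⟩
    exact measureReal_univ_pos
  have hG0 : ∀ t, 0 ≤ G t := fun t => by rw [hG]; exact integral_nonneg fun r => hU0 _
  have hUm : Measurable U := by
    have h1 := (Real.measurable_exp.comp (measurable_const_mul α)).mul hUanti.measurable
    convert h1 using 1
    ext t
    simp [← mul_assoc, ← Real.exp_add]
  have hgrow : ∀ t s, 0 ≤ s → G (t + s) ≤ Real.exp (α * s) * G t := by
    intro t s hs
    rw [hG, hG, ← integral_const_mul]
    refine integral_mono (hint _) ((hint _).const_mul _) fun r => ?_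
    have := shift_le hUanti (t - r) hs
    rwa [show t - r + s = t + s - r by ring] at this
  obtain ⟨a, C₀, hC₀, hUG⟩ := le_conv hα m hm hU0 hUanti hint
  simp_rw [← hG] at hUG
  obtain ⟨T, B, hB, hTB⟩ := exp_bound hα hδ hU0 hUanti hK hG0 hgrow (hslow 1) hC₀ hUG
  set C := C₀ + 1 with hCdef
  have hC : 0 < C := by positivity
  have hev : ∀ s, ∀ᶠ t in atTop, U (t + s) / G t ≤ C := by
    intro s
    have h1 := (hslow (s + a)).const_mul C₀
    rw [mul_one] at h1
    filter_upwards [h1.eventually_le_const (show C₀ < C by linarith)] with t ht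
    refine le_trans ?_ ht
    rw [← mul_div_assoc, ← add_assoc]
    exact div_le_div_of_nonneg_right (hUG _) (hG0 _)
  -- the rescaled and truncated function, bounded uniformly in `t`
  let D : ℝ → ℝ → ℝ := fun t s => min (U (t + s) / G t) C
  have hD0 : ∀ t s, 0 ≤ D t s := fun t s => le_min (div_nonneg (hU0 _) (hG0 _)) hC.le
  have hDC : ∀ t s, D t s ≤ C := fun t s => min_le_right _ _
  have hDm : ∀ t, Measurable (D t) := fun t =>
    ((hUm.comp (measurable_const_add t)).div_const _).min measurable_const
  have hDabs : ∀ t s, |D t s| ≤ C := fun t s => by rw [abs_of_nonneg (hD0 t s)]; exact hDC t s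
  -- without truncation the integral is exactly `G (t + s) / G t`; truncation is eventually
  -- inactive at each point, and the error is dominated by an `m`-integrable exponential
  have hlim : ∀ s, Tendsto (fun t => ∫ r, D t (s - r) ∂m) atTop (𝓝 1) := by
    intro s
    have hDi : ∀ t, Integrable (fun r => D t (s - r)) m := fun t =>
      Integrable.of_bound ((hDm t).comp (by fun_prop)).aestronglyMeasurable C
        (Eventually.of_forall fun r => hDabs _ _)
    have hUi : ∀ t, Integrable (fun r => U (t + (s - r)) / G t) m := fun t => by
      have := (hint (t + s)).div_const (G t)
      simpa only [add_sub_assoc] using this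
    have h1 : Tendsto (fun t => ∫ r, (U (t + (s - r)) / G t - D t (s - r)) ∂m) atTop (𝓝 0) := by
      rw [show (0 : ℝ) = ∫ r, (0 : ℝ) ∂m by simp]
      refine tendsto_integral_filter_of_dominated_convergence
        (fun r => B * Real.exp (δ * |s|) * Real.exp (δ * |r|)) ?_ ?_ (hexp.const_mul _) ?_
      · exact Eventually.of_forall fun t => ((hUi t).sub (hDi t)).1
      · filter_upwards [eventually_ge_atTop T] with t ht
        refine Eventually.of_forall fun r => ?_
        have hGt := (hTB t ht).1
        have h2 := (hTB t ht).2 (s - r)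
        have h3 : D t (s - r) ≤ U (t + (s - r)) / G t := min_le_left _ _
        rw [Real.norm_eq_abs, abs_of_nonneg (by linarith)]
        refine (sub_le_self _ (hD0 _ _)).trans ?_
        rw [div_le_iff₀ hGt]
        refine h2.trans ?_
        have h4 : Real.exp (δ * |s - r|) ≤ Real.exp (δ * |s|) * Real.exp (δ * |r|) := by
          rw [← Real.exp_add, ← mul_add]
          have := abs_sub s r
          gcongr
        calc B * Real.exp (δ * |s - r|) * G t
            ≤ B * (Real.exp (δ * |s|) * Real.exp (δ * |r|)) * G t := by gcongr
          _ = _ := by ring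
      · refine Eventually.of_forall fun r => tendsto_const_nhds.congr' ?_
        filter_upwards [hev (s - r)] with t ht
        simp only [D, min_eq_left ht, sub_self]
    have h2 := (hslow s).sub h1
    rw [sub_zero] at h2
    refine h2.congr fun t => ?_
    rw [integral_sub (hUi t) (hDi t), integral_div]
    simp_rw [← add_sub_assoc]
    rw [← hG, sub_sub_cancel]
  have hsm := contDiff_charFun_of_exp hδ m hexp
  have kernel : ∀ (c : ℝ) {h η : ℝ}, 0 < h → 0 < η → ∃ φ : ℝ → ℝ, (∀ x, 0 ≤ φ x) ∧ Integrable φ ∧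
      ∫ x, φ x = 1 ∧ ∫ x in {x | h ≤ |x - c|}, φ x ≤ η ∧
      Tendsto (fun t => ∫ u, D t u * φ u) atTop (𝓝 (1 / M)) := by
    intro c h η hh hη
    obtain ⟨f, φ, hf1, hf2, hf3, hφ0, hφi, hφ, hφ1, hφη⟩ := exists_kernel hη hh c
    refine ⟨φ, hφ0, hφi, hφ1, hφη, ?_⟩
    have := wiener_tendsto m hsm hne hf1 hf2 D C hDm hDabs hlim
    simp_rw [hφ, hf3, ← Complex.ofReal_mul, integral_complex_ofReal] at this
    have h2 := (Complex.continuous_re.tendsto _).comp this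
    have h3 : ((1 : ℂ) / (m.real univ : ℂ)).re = 1 / M := by
      rw [← Complex.ofReal_one, ← Complex.ofReal_div, Complex.ofReal_re]
    rw [h3] at h2
    exact h2
  have hS : ∀ c h : ℝ, MeasurableSet {x : ℝ | h ≤ |x - c|} := fun c h =>
    measurableSet_le measurable_const (by fun_prop)
  have hDφi : ∀ t (φ : ℝ → ℝ), Integrable φ → Integrable fun u => D t u * φ u := fun t φ hφ =>
    hφ.bdd_mul (hDm t).aestronglyMeasurable (c := C) (Eventually.of_forall fun u => hDabs t u)
  rw [tendsto_order]
  constructor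
  -- lower bound: average over `(t, t + 2 h)`, where `U` is at most `e^(2 α h) U t`
  · intro y hy
    have hcont : Tendsto (fun h : ℝ => Real.exp (-(2 * α * h)) * (1 / M - C * h)) (𝓝[>] 0) (𝓝 (1 / M)) := by
      have : Continuous fun h : ℝ => Real.exp (-(2 * α * h)) * (1 / M - C * h) := by fun_prop
      have h2 := (this.tendsto 0).mono_left (nhdsWithin_le_nhds (s := Ioi 0))
      simpa using h2
    obtain ⟨h, hyh, hh⟩ := ((hcont.eventually_const_lt hy).and self_mem_nhdsWithin).exists
    have hh : 0 < h := hh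
    obtain ⟨φ, hφ0, hφi, hφ1, hφη, hφt⟩ := kernel h hh hh
    have hl := (hφt.sub_const (C * h)).const_mul (Real.exp (-(2 * α * h)))
    filter_upwards [hl.eventually_const_lt hyh, eventually_ge_atTop T] with t ht htT
    refine ht.trans_le ?_
    have hGt := (hTB t htT).1
    have key : ∫ u, D t u * φ u ≤ Real.exp (2 * α * h) * (U t / G t) + C * h := by
      rw [← integral_add_compl (hS h h) (hDφi t φ hφi), add_comm]
      refine add_le_add ?_ ?_
      · calc ∫ u in {x | h ≤ |x - h|}ᶜ, D t u * φ u
            ≤ ∫ u in {x | h ≤ |x - h|}ᶜ, Real.exp (2 * α * h) * (U t / G t) * φ u := by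
              refine setIntegral_mono_on (hDφi t φ hφi).integrableOn (hφi.const_mul _).integrableOn
                (hS h h).compl fun u hu => ?_
              simp only [mem_compl_iff, mem_ofPred_eq, not_le, abs_lt] at hu
              refine mul_le_mul_of_nonneg_right ((min_le_left _ _).trans ?_) (hφ0 u)
              rw [← mul_div_assoc]
              refine div_le_div_of_nonneg_right ((shift_le hUanti t (by linarith)).trans ?_) hGt.le
              have := hU0 t
              gcongr ?_ * _
              exact Real.exp_le_exp.2 (by nlinarith)
          _ = Real.exp (2 * α * h) * (U t / G t) * ∫ u in {x | h ≤ |x - h|}ᶜ, φ u :=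
              integral_const_mul _ _
          _ ≤ Real.exp (2 * α * h) * (U t / G t) * 1 := by
              have h1 := div_nonneg (hU0 t) hGt.le
              gcongr
              rw [← hφ1]
              exact setIntegral_le_integral hφi (Eventually.of_forall hφ0)
          _ = _ := mul_one _
      · calc ∫ u in {x | h ≤ |x - h|}, D t u * φ u ≤ ∫ u in {x | h ≤ |x - h|}, C * φ u := by
              refine setIntegral_mono (hDφi t φ hφi).integrableOn (hφi.const_mul _).integrableOn
                fun u => ?_
              exact mul_le_mul_of_nonneg_right (hDC t u) (hφ0 u)
          _ = C * ∫ u in {x | h ≤ |x - h|}, φ u := integral_const_mul _ _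
          _ ≤ C * h := by gcongr
    calc Real.exp (-(2 * α * h)) * ((∫ u, D t u * φ u) - C * h)
        ≤ Real.exp (-(2 * α * h)) * (Real.exp (2 * α * h) * (U t / G t)) := by
          gcongr; linarith
      _ = U t / G t := by rw [← mul_assoc, ← Real.exp_add]; simp
  -- upper bound: average over `(t - 2 h, t)`, where `U` is at least `e^(-2 α h) U t`
  · intro y hy
    have hcont : Tendsto (fun h : ℝ => Real.exp (2 * α * h) / (1 - h) * (1 / M)) (𝓝[>] 0) (𝓝 (1 / M)) := by
      have : ContinuousAt (fun h : ℝ => Real.exp (2 * α * h) / (1 - h) * (1 / M)) 0 := by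
        refine ContinuousAt.mul (ContinuousAt.div (by fun_prop) (by fun_prop) (by norm_num)) (by fun_prop)
      have h2 := this.tendsto.mono_left (nhdsWithin_le_nhds (s := Ioi 0))
      simpa using h2
    obtain ⟨h, ⟨hyh, hh1⟩, hh⟩ := (((hcont.eventually_lt_const hy).and
      ((eventually_lt_nhds (show (0:ℝ) < 1 by norm_num)).filter_mono nhdsWithin_le_nhds)).and
      self_mem_nhdsWithin).exists
    have hh : 0 < h := hh
    obtain ⟨φ, hφ0, hφi, hφ1, hφη, hφt⟩ := kernel (-h) hh hh
    have hl := hφt.const_mul (Real.exp (2 * α * h) / (1 - h))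
    have hev0 := hev 0
    simp only [add_zero] at hev0
    filter_upwards [hl.eventually_lt_const hyh, eventually_ge_atTop T, hev0] with t ht htT htC
    refine lt_of_le_of_lt ?_ ht
    have hGt := (hTB t htT).1
    have hg0 : 0 ≤ U t / G t := div_nonneg (hU0 t) hGt.le
    have key : Real.exp (-(2 * α * h)) * (U t / G t) * (1 - h) ≤ ∫ u, D t u * φ u := by
      calc Real.exp (-(2 * α * h)) * (U t / G t) * (1 - h)
          ≤ Real.exp (-(2 * α * h)) * (U t / G t) * ∫ u in {x | h ≤ |x - (-h)|}ᶜ, φ u := by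
            gcongr
            have := integral_add_compl (hS (-h) h) hφi
            rw [hφ1] at this
            linarith
        _ = ∫ u in {x | h ≤ |x - (-h)|}ᶜ, Real.exp (-(2 * α * h)) * (U t / G t) * φ u :=
            (integral_const_mul _ _).symm
        _ ≤ ∫ u in {x | h ≤ |x - (-h)|}ᶜ, D t u * φ u := by
            refine setIntegral_mono_on (hφi.const_mul _).integrableOn (hDφi t φ hφi).integrableOn
              (hS (-h) h).compl fun u hu => ?_
            simp only [mem_compl_iff, mem_ofPred_eq, not_le, abs_lt] at hu
            refine mul_le_mul_of_nonneg_right (le_min ?_ ?_) (hφ0 u)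
            · rw [← mul_div_assoc]
              refine div_le_div_of_nonneg_right ?_ hGt.le
              have h1 := shift_le hUanti (t + u) (s := -u) (by linarith)
              rw [add_neg_cancel_right] at h1
              have h2 := hU0 (t + u)
              calc Real.exp (-(2 * α * h)) * U t
                  ≤ Real.exp (-(2 * α * h)) * (Real.exp (2 * α * h) * U (t + u)) := by
                    gcongr
                    refine h1.trans ?_
                    gcongr ?_ * _
                    exact Real.exp_le_exp.2 (by nlinarith)
                _ = _ := by rw [← mul_assoc, ← Real.exp_add]; simp
            · refine (mul_le_of_le_one_left hg0 ?_).trans htC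
              exact Real.exp_le_one_iff.2 (by have : 0 < 2 * α * h := by positivity
                                              linarith)
        _ ≤ ∫ u, D t u * φ u :=
            setIntegral_le_integral (hDφi t φ hφi)
              (Eventually.of_forall fun u => mul_nonneg (hD0 t u) (hφ0 u))
    have h1h : 0 < 1 - h := by linarith
    calc U t / G t = Real.exp (2 * α * h) / (1 - h) * (Real.exp (-(2 * α * h)) * (U t / G t) * (1 - h)) := by
          rw [Real.exp_neg]; field_simp
      _ ≤ _ := by gcongr

/-! ### Multiplicative convolution in logarithmic coordinates -/

lemma mulConv_apply_prod (ν ρ : Measure ℝ) [SigmaFinite ν] [SigmaFinite ρ] {s : Set ℝ}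
    (hs : MeasurableSet s) : mulConv ν ρ s = (ρ.prod ν) {p | p.1 * p.2 ∈ s} := by
  have hS : MeasurableSet {p : ℝ × ℝ | p.1 * p.2 ∈ s} := measurable_mul hs
  rw [Measure.prod_apply hS, mulConv, Measure.bind_apply hs]
  · refine lintegral_congr fun x => ?_
    rw [Measure.map_apply (by fun_prop) hs]
    rfl
  · refine Measurable.aemeasurable (Measure.measurable_of_measurable_coe _ fun t ht => ?_)
    have hT : MeasurableSet {p : ℝ × ℝ | p.1 * p.2 ∈ t} := measurable_mul ht
    have := measurable_measure_prodMk_left (ν := ν) hT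
    convert this using 2 with x
    rw [Measure.map_apply (by fun_prop) ht]
    rfl

lemma restrict_Ioi_zero {ρ : Measure ℝ} (h : ρ (Iic 0) = 0) : ρ.restrict (Ioi 0) = ρ := by
  refine Measure.restrict_eq_self_of_ae_mem ?_
  rw [ae_iff]
  convert h using 2
  ext; simp

lemma mulConv_Ioi (ν ρ : Measure ℝ) [SigmaFinite ν] [SigmaFinite ρ] (h : ρ (Iic 0) = 0) (x : ℝ) :
    mulConv ν ρ (Ioi x) = ∫⁻ y in Ioi 0, ν (Ioi (x / y)) ∂ρ := by
  have hS : MeasurableSet {p : ℝ × ℝ | p.1 * p.2 ∈ Ioi x} := measurable_mul measurableSet_Ioi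
  rw [mulConv_apply_prod ν ρ measurableSet_Ioi, Measure.prod_apply hS]
  conv_lhs => rw [← restrict_Ioi_zero h]
  refine setLIntegral_congr_fun measurableSet_Ioi fun y hy => ?_
  congr 1; ext u
  simp [div_lt_iff₀' (show 0 < y from hy)]

lemma mulConv_Ioi' (ν ρ : Measure ℝ) [SigmaFinite ν] [SigmaFinite ρ] (h : ν (Iic 0) = 0) (x : ℝ) :
    mulConv ν ρ (Ioi x) = ∫⁻ u in Ioi 0, ρ (Ioi (x / u)) ∂ν := by
  have hS : MeasurableSet {p : ℝ × ℝ | p.1 * p.2 ∈ Ioi x} := measurable_mul measurableSet_Ioi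
  rw [mulConv_apply_prod ν ρ measurableSet_Ioi, Measure.prod_apply_symm hS]
  conv_lhs => rw [← restrict_Ioi_zero h]
  refine setLIntegral_congr_fun measurableSet_Ioi fun u hu => ?_
  congr 1; ext y
  simp [div_lt_iff₀ (show 0 < u from hu)]

/-- The image under `log` of `y ^ α ρ(dy)`, as a measure on the additive group `ℝ`. Its
characteristic function is the Mellin transform of `ρ` along `Re = α`. -/
def logTilt (ρ : Measure ℝ) (α : ℝ) : Measure ℝ :=
  ((ρ.restrict (Ioi 0)).withDensity fun y => ENNReal.ofReal (y ^ α)).map Real.log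

lemma lintegral_logTilt (ρ : Measure ℝ) (α : ℝ) {f : ℝ → ℝ≥0∞} (hf : Measurable f) :
    ∫⁻ r, f r ∂(logTilt ρ α) = ∫⁻ y in Ioi 0, ENNReal.ofReal (y ^ α) * f (Real.log y) ∂ρ := by
  rw [logTilt, lintegral_map hf Real.measurable_log]
  exact lintegral_withDensity_eq_lintegral_mul (ρ.restrict (Ioi 0))
    (f := fun y => ENNReal.ofReal (y ^ α)) (by fun_prop) (g := fun y => f (Real.log y))
    (hf.comp Real.measurable_log)

lemma lintegral_logTilt_exp_lt_top {ρ : Measure ℝ} {α δ : ℝ} (hmom : MomentCond ρ α δ) :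
    ∫⁻ r, ENNReal.ofReal (Real.exp (δ * |r|)) ∂(logTilt ρ α) < ⊤ := by
  rw [lintegral_logTilt _ _ (by fun_prop)]
  refine lt_of_le_of_lt ?_ hmom
  refine setLIntegral_mono' measurableSet_Ioi fun y hy => ?_
  have hy : 0 < y := hy
  rw [← ENNReal.ofReal_mul (by positivity)]
  refine ENNReal.ofReal_le_ofReal ?_
  rw [Real.rpow_def_of_pos hy, Real.rpow_def_of_pos hy, Real.rpow_def_of_pos hy, ← Real.exp_add]
  rcases abs_cases (Real.log y) with ⟨h, -⟩ | ⟨h, -⟩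
  · exact le_max_of_le_right (Real.exp_le_exp.2 (by rw [h]; linarith))
  · exact le_max_of_le_left (Real.exp_le_exp.2 (by rw [h]; linarith))

lemma isFiniteMeasure_logTilt {ρ : Measure ℝ} {α δ : ℝ} (hδ : 0 < δ) (hmom : MomentCond ρ α δ) :
    IsFiniteMeasure (logTilt ρ α) := by
  refine ⟨lt_of_le_of_lt ?_ (lintegral_logTilt_exp_lt_top hmom)⟩
  rw [← lintegral_one]
  refine lintegral_mono fun r => ?_
  rw [← ENNReal.ofReal_one]
  exact ENNReal.ofReal_le_ofReal (Real.one_le_exp (by positivity))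

lemma integral_logTilt {E : Type*} [NormedAddCommGroup E] [NormedSpace ℝ E] (ρ : Measure ℝ) (α : ℝ)
    {f : ℝ → E} (hf : StronglyMeasurable f) :
    ∫ r, f r ∂(logTilt ρ α) = ∫ y in Ioi 0, (y ^ α) • f (Real.log y) ∂ρ := by
  rw [logTilt, integral_map Real.measurable_log.aemeasurable hf.aestronglyMeasurable,
    integral_withDensity_eq_integral_toReal_smul (by fun_prop) (by simp)]
  refine setIntegral_congr_fun measurableSet_Ioi fun y hy => ?_
  have hy : 0 < y := hy
  rw [ENNReal.toReal_ofReal (by positivity)]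

lemma charFun_logTilt (ρ : Measure ℝ) (α θ : ℝ) :
    charFun (logTilt ρ α) θ = ∫ y in Ioi (0:ℝ), (y : ℂ) ^ ((α : ℂ) + (θ : ℂ) * Complex.I) ∂ρ := by
  rw [charFun_apply_real, integral_logTilt _ _ (Continuous.stronglyMeasurable (by fun_prop))]
  refine setIntegral_congr_fun measurableSet_Ioi fun y hy => ?_
  have hy : 0 < y := hy
  have hy' : (y : ℂ) ≠ 0 := by exact_mod_cast hy.ne'
  rw [Complex.cpow_add _ _ hy', Complex.real_smul, Complex.ofReal_cpow hy.le,
    Complex.cpow_def_of_ne_zero hy' (_ * _), Complex.ofReal_log hy.le]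
  ring_nf

lemma real_univ_logTilt (ρ : Measure ℝ) (α : ℝ) :
    (logTilt ρ α).real univ = ∫ y in Ioi (0:ℝ), y ^ α ∂ρ := by
  have := integral_logTilt ρ α (f := fun _ => (1:ℝ)) stronglyMeasurable_const
  simpa using this

/-- Finiteness of the tails of `ν ⊛ ρ` passes to `ν`, because
`ν(z, ∞) ρ(c, ∞) ≤ (ν ⊛ ρ)(z c, ∞)` and `ρ(c, ∞) ≠ 0` for some `c > 0`. -/
lemma tail_lt_top {ν ρ : Measure ℝ} [SigmaFinite ν] [SigmaFinite ρ] (hρ : ρ ≠ 0)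
    (hsupp : ρ (Iic 0) = 0) (hfin : ∀ x > 0, mulConv ν ρ (Ioi x) < ⊤) :
    ∀ z > 0, ν (Ioi z) < ⊤ := by
  intro z hz
  obtain ⟨c, hc, hc2⟩ : ∃ c > 0, ρ (Ioi c) ≠ 0 := by
    by_contra! H
    refine hρ ?_
    rw [← restrict_Ioi_zero hsupp, Measure.restrict_eq_zero]
    have : Ioi (0:ℝ) ⊆ ⋃ n : ℕ, Ioi (1 / ((n:ℝ) + 1)) := fun x hx => by
      obtain ⟨n, hn⟩ := exists_nat_one_div_lt (show (0:ℝ) < x from hx)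
      exact mem_iUnion.2 ⟨n, hn⟩
    exact measure_mono_null this (measure_iUnion_null fun n => H _ (by positivity))
  have h1 : ν (Ioi z) * ρ (Ioi c) ≤ mulConv ν ρ (Ioi (z * c)) := by
    rw [mulConv_Ioi _ _ hsupp, ← setLIntegral_const]
    refine (setLIntegral_mono' measurableSet_Ioi fun y hy => ?_).trans
      (lintegral_mono_set (Ioi_subset_Ioi hc.le))
    refine measure_mono (Ioi_subset_Ioi ?_)
    have hy : c < y := hy
    rw [div_le_iff₀ (hc.trans hy)]
    gcongr
  have h2 := h1.trans_lt (hfin _ (mul_pos hz hc))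
  by_contra h
  rw [not_lt, top_le_iff] at h
  rw [h, ENNReal.top_mul hc2] at h2
  exact lt_irrefl _ h2

/-- Markov's inequality for the moment of order `α + δ`. -/
lemma markov_tail {ρ : Measure ℝ} {α δ : ℝ} (hαδ : 0 < α + δ) (hmom : MomentCond ρ α δ) :
    ∃ P : ℝ, 0 ≤ P ∧ ∀ t : ℝ, ρ (Ioi (Real.exp t)) < ⊤ ∧
      (ρ (Ioi (Real.exp t))).toReal ≤ P * Real.exp (-((α + δ) * t)) := by
  refine ⟨_, ENNReal.toReal_nonneg (a := ∫⁻ y in Ioi (0:ℝ),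
    ENNReal.ofReal (max (y ^ (α - δ)) (y ^ (α + δ))) ∂ρ), fun t => ?_⟩
  have h1 : ENNReal.ofReal (Real.exp ((α + δ) * t)) * ρ (Ioi (Real.exp t)) ≤
      ∫⁻ y in Ioi (0:ℝ), ENNReal.ofReal (max (y ^ (α - δ)) (y ^ (α + δ))) ∂ρ := by
    rw [← setLIntegral_const]
    refine (setLIntegral_mono' measurableSet_Ioi fun y hy => ?_).trans
      (lintegral_mono_set (Ioi_subset_Ioi (Real.exp_pos t).le))
    have hy : Real.exp t < y := hy
    refine ENNReal.ofReal_le_ofReal (le_max_of_le_right ?_)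
    rw [mul_comm, Real.exp_mul]
    exact Real.rpow_le_rpow (Real.exp_pos t).le hy.le hαδ.le
  have hlt : ρ (Ioi (Real.exp t)) < ⊤ := by
    by_contra h
    rw [not_lt, top_le_iff] at h
    rw [h, ENNReal.mul_top (by simpa using Real.exp_pos _)] at h1
    exact (h1.trans_lt hmom).ne rfl
  refine ⟨hlt, ?_⟩
  have h2 := ENNReal.toReal_mono hmom.ne h1
  rw [ENNReal.toReal_mul, ENNReal.toReal_ofReal (Real.exp_pos _).le] at h2
  rw [Real.exp_neg, ← div_eq_mul_inv, le_div_iff₀ (Real.exp_pos _), mul_comm]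
  exact h2

/-! ### Reduction to the additive problem -/

/-- The tail of `ρ` is negligible compared with any regularly varying tail `Q` of exponent `α`: the
former is `O(x ^ (-(α + δ)))`, whereas Potter's bound gives `Q x ≥ const * x ^ (-(α + δ / 2))`. -/
lemma tail_ratio_zero {α δ : ℝ} (hα : 0 < α) (hδ : 0 < δ) {ρ : Measure ℝ}
    (hmom : MomentCond ρ α δ) {Q : ℝ → ℝ} (hQ0 : ∀ x, 0 ≤ Q x) (hQ : AntitoneOn Q (Ioi 0))
    (hslow : Tendsto (fun t => (Real.exp (α * (t + 1)) * Q (Real.exp (t + 1))) /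
      (Real.exp (α * t) * Q (Real.exp t))) atTop (𝓝 1)) :
    Tendsto (fun x => (ρ (Ioi x)).toReal / Q x) atTop (𝓝 0) := by
  set G : ℝ → ℝ := fun t => Real.exp (α * t) * Q (Real.exp t) with hGdef
  have hG0 : ∀ t, 0 ≤ G t := fun t => mul_nonneg (Real.exp_pos _).le (hQ0 _)
  have hGanti : Antitone fun t => Real.exp (-(α * t)) * G t := by
    intro s t hst
    simp only [hGdef, ← mul_assoc, ← Real.exp_add, neg_add_cancel, Real.exp_zero, one_mul]
    exact hQ (Real.exp_pos _) (Real.exp_pos _) (Real.exp_le_exp.2 hst)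
  obtain ⟨T, B, hB, hpos, hpot⟩ := potter hα (half_pos hδ) hG0
    (fun t s hs => shift_le hGanti t hs) hslow
  obtain ⟨P, hP, hmk⟩ := markov_tail (by linarith) hmom
  have hlim : Tendsto (fun t => (ρ (Ioi (Real.exp t))).toReal / Q (Real.exp t)) atTop (𝓝 0) := by
    have hbd : Tendsto (fun t => P * B * Real.exp (-(δ / 2 * T)) / G T * Real.exp (-(δ / 2 * t)))
        atTop (𝓝 0) := by
      rw [← mul_zero (P * B * Real.exp (-(δ / 2 * T)) / G T)]
      refine Tendsto.const_mul _ (Real.tendsto_exp_neg_atTop_nhds_zero.comp ?_)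
      exact tendsto_id.const_mul_atTop (half_pos hδ)
    refine squeeze_zero' (Eventually.of_forall fun t => div_nonneg ENNReal.toReal_nonneg (hQ0 _))
      ?_ hbd
    filter_upwards [eventually_ge_atTop T] with t ht
    have hGt := hpos t ht
    have hGT := hpos T le_rfl
    have hQt : 0 < Q (Real.exp t) := (pos_iff_pos_of_mul_pos hGt).1 (Real.exp_pos _)
    have h1 := hpot t ht T le_rfl
    rw [abs_of_nonpos (by linarith)] at h1
    rw [div_le_iff₀ hQt]
    refine (hmk t).2.trans ?_
    have hQe : Q (Real.exp t) = Real.exp (-(α * t)) * G t := by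
      simp only [hGdef, ← mul_assoc, ← Real.exp_add, neg_add_cancel, Real.exp_zero, one_mul]
    have h2 : P * Real.exp (-((α + δ) * t)) * G T ≤
        P * Real.exp (-((α + δ) * t)) * (B * Real.exp (δ / 2 * -(T - t)) * G t) := by gcongr
    have h3 : P * Real.exp (-((α + δ) * t)) * (B * Real.exp (δ / 2 * -(T - t)) * G t) =
        P * B * Real.exp (-(δ / 2 * T)) * Real.exp (-(δ / 2 * t)) * (Real.exp (-(α * t)) * G t) := by
      have : Real.exp (-((α + δ) * t)) * Real.exp (δ / 2 * -(T - t)) =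
          Real.exp (-(δ / 2 * T)) * Real.exp (-(δ / 2 * t)) * Real.exp (-(α * t)) := by
        simp only [← Real.exp_add]; ring_nf
      linear_combination (P * B * G t) * this
    rw [h3, ← le_div_iff₀ hGT] at h2
    rw [hQe]
    refine h2.trans_eq ?_
    ring
  refine (hlim.comp Real.tendsto_log_atTop).congr' ?_
  filter_upwards [eventually_gt_atTop 0] with x hx
  simp [Real.exp_log hx]

/-- The mass of `ν` on `(0, 1]` contributes negligibly to the tail of `ν ⊛ ρ`. The part on `(0, b]`
is controlled by `Cond218`, and the part on `(b, 1]` is at most `ρ(x, ∞) ν(b, 1]`. -/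
lemma low_part_zero {ν ρ : Measure ℝ} [SigmaFinite ν] [SigmaFinite ρ]
    (hνsupp : ν (Iic 0) = 0) (h218 : Cond218 ν ρ)
    (hfin : ∀ x > 0, mulConv ν ρ (Ioi x) < ⊤) (hνfin : ∀ z > 0, ν (Ioi z) < ⊤)
    (hρfin : ∀ x > 0, ρ (Ioi x) < ⊤)
    (hratio : Tendsto (fun x => (ρ (Ioi x)).toReal / (mulConv ν ρ (Ioi x)).toReal) atTop (𝓝 0)) :
    Tendsto (fun x => (∫⁻ u in Ioc 0 1, ρ (Ioi (x / u)) ∂ν).toReal /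
      (mulConv ν ρ (Ioi x)).toReal) atTop (𝓝 0) := by
  have hle : ∀ b x, ∫⁻ u in Ioc 0 b, ρ (Ioi (x / u)) ∂ν ≤ mulConv ν ρ (Ioi x) := fun b x => by
    rw [mulConv_Ioi' _ _ hνsupp]
    exact lintegral_mono_set fun u hu => hu.1
  rw [Metric.tendsto_nhds]
  intro ε hε
  obtain ⟨b, hlb, hb0, hb1⟩ : ∃ b, limsup (fun x : ℝ =>
        (∫⁻ y in Ioc (0:ℝ) b, ρ (Ioi (x / y)) ∂ν).toReal
          / ((mulConv ν ρ) (Ioi x)).toReal) atTop < ε / 2 ∧ 0 < b ∧ b < 1 := by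
    have h1 := h218.eventually (gt_mem_nhds (half_pos hε))
    have h2 : ∀ᶠ b : ℝ in 𝓝[>] 0, 0 < b ∧ b < 1 := Ioo_mem_nhdsGT one_pos
    exact (h1.and h2).exists
  -- the real `limsup` is meaningful because the ratio is bounded by `1`
  have hev := eventually_lt_of_limsup_lt hlb (isBoundedUnder_of_eventually_le (a := 1) (by
    filter_upwards [eventually_gt_atTop 0] with x hx
    exact div_le_one_of_le₀ (ENNReal.toReal_mono (hfin x hx).ne (hle b x)) ENNReal.toReal_nonneg))
  have hI : ν (Ioc b 1) < ⊤ := (measure_mono Ioc_subset_Ioi_self).trans_lt (hνfin b hb0)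
  have hsm := (hratio.mul_const (ν (Ioc b 1)).toReal).eventually
    (gt_mem_nhds (show 0 * (ν (Ioc b 1)).toReal < ε / 2 by simpa using half_pos hε))
  filter_upwards [hev, hsm, eventually_gt_atTop 0] with x h1 h2 hx
  have hsplit : ∫⁻ u in Ioc 0 1, ρ (Ioi (x / u)) ∂ν ≤
      (∫⁻ u in Ioc 0 b, ρ (Ioi (x / u)) ∂ν) + ρ (Ioi x) * ν (Ioc b 1) := by
    rw [← Ioc_union_Ioc_eq_Ioc hb0.le hb1.le]
    refine (lintegral_union_le _ _ _).trans (add_le_add le_rfl ?_)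
    rw [← setLIntegral_const]
    refine setLIntegral_mono' measurableSet_Ioc fun u hu => measure_mono (Ioi_subset_Ioi ?_)
    rw [le_div_iff₀ (hb0.trans hu.1)]
    exact mul_le_of_le_one_right hx.le hu.2
  have hAfin : ∫⁻ u in Ioc 0 b, ρ (Ioi (x / u)) ∂ν < ⊤ := (hle b x).trans_lt (hfin x hx)
  have hBfin : ρ (Ioi x) * ν (Ioc b 1) < ⊤ := ENNReal.mul_lt_top (hρfin x hx) hI
  have h3 := ENNReal.toReal_mono (ENNReal.add_lt_top.2 ⟨hAfin, hBfin⟩).ne hsplit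
  rw [ENNReal.toReal_add hAfin.ne hBfin.ne, ENNReal.toReal_mul] at h3
  rw [Real.dist_0_eq_abs, abs_of_nonneg (by positivity)]
  calc _ ≤ ((∫⁻ u in Ioc 0 b, ρ (Ioi (x / u)) ∂ν).toReal +
        (ρ (Ioi x)).toReal * (ν (Ioc b 1)).toReal) / (mulConv ν ρ (Ioi x)).toReal := by gcongr
    _ = (∫⁻ u in Ioc 0 b, ρ (Ioi (x / u)) ∂ν).toReal / (mulConv ν ρ (Ioi x)).toReal +
        (ρ (Ioi x)).toReal / (mulConv ν ρ (Ioi x)).toReal * (ν (Ioc b 1)).toReal := by ring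
    _ < ε := by linarith

lemma mulConv_Ioi_split (ν ρ : Measure ℝ) [SigmaFinite ν] [SigmaFinite ρ]
    (hνsupp : ν (Iic 0) = 0) (x : ℝ) :
    mulConv ν ρ (Ioi x) = (∫⁻ u in Ioc 0 1, ρ (Ioi (x / u)) ∂ν) +
      mulConv (ν.restrict (Ioi 1)) ρ (Ioi x) := by
  rw [mulConv_Ioi' ν ρ hνsupp, mulConv_Ioi' (ν.restrict (Ioi 1)) ρ
    (Measure.restrict_apply_eq_zero' measurableSet_Ioi |>.2
      (measure_mono_null inter_subset_left hνsupp)),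
    Measure.restrict_restrict measurableSet_Ioi,
    inter_eq_self_of_subset_right (Ioi_subset_Ioi zero_le_one),
    ← Ioc_union_Ioi_eq_Ioi (zero_le_one (α := ℝ)),
    lintegral_union measurableSet_Ioi (Ioc_disjoint_Ioi le_rfl)]

/-- In logarithmic coordinates multiplicative convolution becomes additive convolution with
`logTilt ρ α`, once tails are multiplied by `x ^ α`. -/
lemma lintegral_logTilt_tail (ν ρ : Measure ℝ) [IsFiniteMeasure ν] [SigmaFinite ρ]
    (hsupp : ρ (Iic 0) = 0) (α t : ℝ) :
    ∫⁻ r, ENNReal.ofReal (Real.exp (α * (t - r)) * (ν (Ioi (Real.exp (t - r)))).toReal)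
      ∂(logTilt ρ α) = ENNReal.ofReal (Real.exp (α * t)) * mulConv ν ρ (Ioi (Real.exp t)) := by
  have hmeas : Measurable fun x : ℝ => (ν (Ioi x)).toReal :=
    Antitone.measurable fun x y hxy =>
      ENNReal.toReal_mono (measure_ne_top _ _) (measure_mono (Ioi_subset_Ioi hxy))
  have hexp : Measurable fun r : ℝ => Real.exp (t - r) := by fun_prop
  have hF : Measurable fun r : ℝ =>
      ENNReal.ofReal (Real.exp (α * (t - r)) * (ν (Ioi (Real.exp (t - r)))).toReal) :=
    ((by fun_prop : Measurable fun r : ℝ =>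
      Real.exp (α * (t - r))).mul (hmeas.comp hexp)).ennreal_ofReal
  rw [lintegral_logTilt _ _ hF, mulConv_Ioi _ _ hsupp,
    ← lintegral_const_mul' _ _ ENNReal.ofReal_ne_top]
  refine setLIntegral_congr_fun measurableSet_Ioi fun y hy => ?_
  have hy : 0 < y := hy
  have h1 : Real.exp (t - Real.log y) = Real.exp t / y := by rw [Real.exp_sub, Real.exp_log hy]
  have h2 : y ^ α * Real.exp (α * (t - Real.log y)) = Real.exp (α * t) := by
    rw [Real.rpow_def_of_pos hy, ← Real.exp_add]; ring_nf
  rw [← ENNReal.ofReal_mul (by positivity), ← mul_assoc, h2,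
    ENNReal.ofReal_mul (Real.exp_pos _).le, h1, ENNReal.ofReal_toReal (measure_ne_top _ _)]

/-- Theorem 2.3, direct part. Let `α > 0` and `ρ` a nonzero σ-finite
measure on `(0,∞)` satisfying the moment condition and whose Mellin transform along
`Re = α` does not vanish. If `ν ⊛ ρ` has a regularly varying tail with exponent `α`
and condition (2.18) holds, then `ν` has a regularly varying tail with exponent `α`
and `(ν⊛ρ)(x,∞)/ν(x,∞) → ∫₀^∞ y^α ρ(dy)` as `x → ∞`. -/
theorem regvar_of_mulConv_regvar
    (α : ℝ) (hα : 0 < α) (ρ : Measure ℝ) [SigmaFinite ρ] (hρ : ρ ≠ 0)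
    (hsupp : ρ (Iic 0) = 0) (hmom : ∃ δ : ℝ, 0 < δ ∧ MomentCond ρ α δ)
    (hmel : MellinNonvanishing ρ α)
    (ν : Measure ℝ) [SigmaFinite ν] (hνsupp : ν (Iic 0) = 0)
    (hRV : HasRegVarTail (mulConv ν ρ) α) (h218 : Cond218 ν ρ) :
    HasRegVarTail ν α ∧
      Tendsto (fun x : ℝ => ((mulConv ν ρ) (Ioi x)).toReal / (ν (Ioi x)).toReal) atTop
        (nhds (∫ y in Ioi (0:ℝ), y ^ α ∂ρ)) := by
  obtain ⟨δ, hδ, hmom⟩ := hmom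
  obtain ⟨L, hL, hLpos, hLeq⟩ := hRV
  have hfin : ∀ x > 0, mulConv ν ρ (Ioi x) < ⊤ := fun x hx => by
    rw [hLeq x hx]; exact ENNReal.ofReal_lt_top
  have hνfin := tail_lt_top hρ hsupp hfin
  obtain ⟨P, -, hmk⟩ := markov_tail (ρ := ρ) (by linarith : 0 < α + δ) hmom
  have hρfin : ∀ x > 0, ρ (Ioi x) < ⊤ := fun x hx => by
    simpa [Real.exp_log hx] using (hmk (Real.log x)).1
  set Q : ℝ → ℝ := fun x => (mulConv ν ρ (Ioi x)).toReal with hQdef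
  have hQ0 : ∀ x, 0 ≤ Q x := fun x => ENNReal.toReal_nonneg
  have hQanti : AntitoneOn Q (Ioi 0) := fun x hx y _ hxy =>
    ENNReal.toReal_mono (hfin x hx).ne (measure_mono (Ioi_subset_Ioi hxy))
  have hQL : ∀ᶠ x in atTop, 0 < x ∧ 0 < Q x ∧ x ^ α * Q x = L x := by
    filter_upwards [hLpos, eventually_gt_atTop 0] with x h1 hx
    have h2 : Q x = x ^ (-α) * L x := by
      simp only [hQdef, hLeq x hx]
      exact ENNReal.toReal_ofReal (by positivity)
    refine ⟨hx, by rw [h2]; positivity, ?_⟩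
    rw [h2, ← mul_assoc, ← Real.rpow_add hx, add_neg_cancel, Real.rpow_zero, one_mul]
  have hexpα : ∀ t, Real.exp t ^ α = Real.exp (α * t) := fun t => by
    rw [← Real.exp_mul, mul_comm]
  have hGslow : ∀ s, Tendsto (fun t => (Real.exp (α * (t + s)) * Q (Real.exp (t + s))) /
      (Real.exp (α * t) * Q (Real.exp t))) atTop (𝓝 1) := fun s => by
    refine ((hL (Real.exp s) (Real.exp_pos s)).comp Real.tendsto_exp_atTop).congr' ?_
    have h1 := Real.tendsto_exp_atTop.eventually hQL
    have h2 := (tendsto_atTop_add_const_right atTop s tendsto_id).eventually h1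
    filter_upwards [h1, h2] with t h1 h2
    simp only [id] at h2
    simp only [Function.comp_apply]
    rw [← Real.exp_add, add_comm s t, ← h1.2.2, ← h2.2.2, hexpα, hexpα]
  have hratio := tail_ratio_zero hα hδ hmom hQ0 hQanti (hGslow 1)
  have hlow := low_part_zero hνsupp h218 hfin hνfin hρfin hratio
  have : IsFiniteMeasure (ν.restrict (Ioi 1)) := ⟨by simpa using hνfin 1 one_pos⟩
  have : IsFiniteMeasure (logTilt ρ α) := isFiniteMeasure_logTilt hδ hmom
  set Q' : ℝ → ℝ := fun x => (mulConv (ν.restrict (Ioi 1)) ρ (Ioi x)).toReal with hQ'def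
  have hfin' : ∀ x > 0, mulConv (ν.restrict (Ioi 1)) ρ (Ioi x) < ⊤ := fun x hx =>
    lt_of_le_of_lt (by rw [mulConv_Ioi_split ν ρ hνsupp]; exact le_add_self) (hfin x hx)
  have hQ'Q : Tendsto (fun x => Q' x / Q x) atTop (𝓝 1) := by
    have h := hlow.const_sub 1
    rw [sub_zero] at h
    refine h.congr' ?_
    filter_upwards [hQL] with x hx
    have hsp := mulConv_Ioi_split ν ρ hνsupp x
    have hlt := hfin x hx.1
    rw [hsp] at hlt
    have h2 : Q x = (∫⁻ u in Ioc 0 1, ρ (Ioi (x / u)) ∂ν).toReal + Q' x := by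
      simp only [hQdef, hQ'def]
      rw [hsp, ENNReal.toReal_add (ENNReal.add_lt_top.1 hlt).1.ne (ENNReal.add_lt_top.1 hlt).2.ne]
    have h3 := hx.2.1
    change 1 - _ / Q x = _
    rw [eq_div_iff h3.ne', sub_mul, div_mul_cancel₀ _ h3.ne']
    linarith
  -- additive coordinates for the truncated measure
  set U : ℝ → ℝ := fun t => Real.exp (α * t) *
    ((ν.restrict (Ioi 1)) (Ioi (Real.exp t))).toReal with hUdef
  set G : ℝ → ℝ := fun t => Real.exp (α * t) * Q' (Real.exp t) with hGdef
  have hU0 : ∀ t, 0 ≤ U t := fun t => mul_nonneg (Real.exp_pos _).le ENNReal.toReal_nonneg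
  have hUanti : Antitone fun t => Real.exp (-(α * t)) * U t := by
    intro s t hst
    simp only [hUdef, ← mul_assoc, ← Real.exp_add, neg_add_cancel, Real.exp_zero, one_mul]
    exact ENNReal.toReal_mono (measure_ne_top _ _)
      (measure_mono (Ioi_subset_Ioi (Real.exp_le_exp.2 hst)))
  have hK : ∀ t ≤ 0, U t ≤ ((ν.restrict (Ioi 1)) univ).toReal := fun t ht => by
    have h1 : Real.exp (α * t) ≤ 1 := by
      rw [Real.exp_le_one_iff]; nlinarith
    exact (mul_le_of_le_one_left ENNReal.toReal_nonneg h1).trans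
      (ENNReal.toReal_mono (measure_ne_top _ _) (measure_mono (subset_univ _)))
  have hUmeas : Measurable U := by
    have h1 : U = fun t => Real.exp (α * t) * (Real.exp (-(α * t)) * U t) := by
      funext t
      rw [← mul_assoc, ← Real.exp_add, add_neg_cancel, Real.exp_zero, one_mul]
    rw [h1]
    exact Measurable.mul (by fun_prop) hUanti.measurable
  have hlint : ∀ t, ∫⁻ r, ENNReal.ofReal (U (t - r)) ∂(logTilt ρ α) =
      ENNReal.ofReal (Real.exp (α * t)) * mulConv (ν.restrict (Ioi 1)) ρ (Ioi (Real.exp t)) :=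
    lintegral_logTilt_tail (ν.restrict (Ioi 1)) ρ hsupp α
  have hUm : ∀ t, AEStronglyMeasurable (fun r => U (t - r)) (logTilt ρ α) := fun t =>
    (hUmeas.comp (measurable_const.sub measurable_id)).aestronglyMeasurable
  have hint : ∀ t, Integrable (fun r => U (t - r)) (logTilt ρ α) := fun t => by
    refine ⟨hUm t, ?_⟩
    rw [hasFiniteIntegral_iff_ofReal (Eventually.of_forall fun r => hU0 _), hlint]
    exact ENNReal.mul_lt_top ENNReal.ofReal_lt_top (hfin' _ (Real.exp_pos t))
  have hG : ∀ t, G t = ∫ r, U (t - r) ∂(logTilt ρ α) := fun t => by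
    rw [integral_eq_lintegral_of_nonneg_ae (Eventually.of_forall fun r => hU0 _) (hUm t), hlint,
      ENNReal.toReal_mul, ENNReal.toReal_ofReal (Real.exp_pos _).le]
  have hexp : Integrable (fun r => Real.exp (δ * |r|)) (logTilt ρ α) := by
    refine ⟨Continuous.aestronglyMeasurable (by fun_prop), ?_⟩
    rw [hasFiniteIntegral_iff_ofReal (Eventually.of_forall fun r => (Real.exp_pos _).le)]
    exact lintegral_logTilt_exp_lt_top hmom
  have hne : ∀ θ, charFun (logTilt ρ α) θ ≠ 0 := fun θ => by
    rw [charFun_logTilt]; exact hmel θ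
  have hq : Tendsto (fun t => Q' (Real.exp t) / Q (Real.exp t)) atTop (𝓝 1) :=
    hQ'Q.comp Real.tendsto_exp_atTop
  have hQev := Real.tendsto_exp_atTop.eventually hQL
  have hslow : ∀ s, Tendsto (fun t => G (t + s) / G t) atTop (𝓝 1) := fun s => by
    have h1 := (((hq.comp (tendsto_atTop_add_const_right atTop s tendsto_id)).div hq
      one_ne_zero).mul (hGslow s))
    rw [div_one, one_mul] at h1
    refine h1.congr' ?_
    filter_upwards [hQev, (tendsto_atTop_add_const_right atTop s tendsto_id).eventually hQev]
      with t h2 h3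
    simp only [id] at h3
    have h4 := h2.2.1.ne'
    have h5 := h3.2.1.ne'
    simp only [hGdef, Pi.div_apply, Function.comp_apply, id]
    by_cases h6 : Q' (Real.exp t) = 0
    · simp [h6]
    · field_simp
  have hcore := core hα hδ (logTilt ρ α) hexp hne hU0 hUanti hK hint hG hslow
  rw [real_univ_logTilt] at hcore
  set M := ∫ y in Ioi (0:ℝ), y ^ α ∂ρ with hM
  have hMpos : 0 < M := by
    rw [hM, ← real_univ_logTilt]
    refine lt_of_le_of_ne measureReal_nonneg fun h => hne 0 ?_
    rw [charFun_zero, ← h]; simp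
  have hNQ : Tendsto (fun x => (ν (Ioi x)).toReal / Q x) atTop (𝓝 (1 / M)) := by
    have h1 := (hcore.mul hq).comp Real.tendsto_log_atTop
    rw [mul_one] at h1
    have hne' : ∀ᶠ x in atTop, Q' x / Q x ≠ 0 := hQ'Q.eventually_ne one_ne_zero
    refine h1.congr' ?_
    filter_upwards [hQL, hne', eventually_ge_atTop 1] with x hx hx' hx1
    have h2 : ν.restrict (Ioi 1) (Ioi x) = ν (Ioi x) := by
      rw [Measure.restrict_apply measurableSet_Ioi,
        inter_eq_self_of_subset_left (Ioi_subset_Ioi hx1)]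
    have h3 := hx.2.1.ne'
    have h4 : Q' x ≠ 0 := fun h => hx' (by rw [h, zero_div])
    simp only [hUdef, hGdef, Function.comp_apply, Real.exp_log hx.1, h2]
    field_simp
  have hMi : (1 / M) ≠ 0 := (one_div_pos.2 hMpos).ne'
  have hNpos : ∀ᶠ x in atTop, 0 < (ν (Ioi x)).toReal := by
    filter_upwards [hNQ.eventually (lt_mem_nhds (one_div_pos.2 hMpos)), hQL] with x h1 h2
    exact (div_pos_iff_of_pos_right h2.2.1).1 h1
  refine ⟨⟨fun x => x ^ α * (ν (Ioi x)).toReal, fun c hc => ?_, ?_, fun x hx => ?_⟩, ?_⟩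
  · have hcx : Tendsto (fun x : ℝ => c * x) atTop atTop := tendsto_id.const_mul_atTop hc
    have h1 := ((hNQ.comp hcx).div hNQ hMi).mul (hL c hc)
    rw [div_self hMi, one_mul] at h1
    refine h1.congr' ?_
    filter_upwards [hQL, hcx.eventually hQL, hNpos] with x h2 h3 h4
    rw [← h2.2.2, ← h3.2.2]
    have h5 := h2.2.1.ne'
    have h6 := h3.2.1.ne'
    have h7 : x ^ α ≠ 0 := (Real.rpow_pos_of_pos h2.1 α).ne'
    simp only [Pi.div_apply, Function.comp_apply]
    have h8 := h4.ne'
    field_simp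
  · filter_upwards [hNpos, eventually_gt_atTop 0] with x h1 hx
    positivity
  · rw [← mul_assoc, ← Real.rpow_add hx, neg_add_cancel, Real.rpow_zero, one_mul,
      ENNReal.ofReal_toReal (hνfin x hx).ne]
  · have h1 := hNQ.inv₀ hMi
    rw [one_div, inv_inv] at h1
    exact h1.congr fun x => inv_div _ _
end
end

section
/- Let α > 0 and 0 < δ < α. Let ρ be a nonzero σ-finite measure on (0,∞) with ∫₀^∞ (y^{α−δ} ∨ y^{α+δ}) ρ(dy) < ∞, and let ν be a σ-finite measure on (0,∞) with ∫₀^1 y^{α+δ} ν(dy) < ∞ such that ν⊛ρ has a regularly varying tail with exponent α. Then lim_{b↓0} limsup_{x→∞} (∫₀^b ρ(x/y,∞) ν(dy)) / ((ν⊛ρ)(x,∞)) = 0; in fact, for every b ∈ (0,1) there is a constant C with ∫₀^b ρ(x/y,∞) ν(dy) ≤ C x^{-(α+δ)} for all x > 1. -/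
/-!
Write `p = α + δ` and `M = ∫₀^∞ z ^ p ρ(dz) < ∞`. Markov's inequality gives
`ρ(x / y, ∞) ≤ M (x / y) ^ (-p)`, and integrating over `y ∈ (0, b]`, `b ≤ 1`, yields
`∫₀^b ρ(x / y, ∞) ν(dy) ≤ M (∫₀^1 y ^ p ν(dy)) x ^ (-p)` (`setLIntegral_tail_le`).

For the ratio in (2.18), the tail `U` of `ν ⊛ ρ` has to be bounded below by a power of `x` that
decays more slowly than `x ^ (-p)`. Since `U` is antitone and `U (2x) / U x → 2 ^ (-α)`, iterating
`U (2x) ≥ 2 ^ (-β) U x` along a dyadic sequence gives `U x ≥ c x ^ (-β)` for any `β > α`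
(`HasRegVarTail.exists_le_tail`). With `β = α + δ / 2` the ratio is `O(x ^ (-δ / 2))`, so
for `b ≤ 1` its limsup vanishes. Monotonicity of `U` is what replaces a uniform convergence
theorem for the slowly varying factor.
-/

open MeasureTheory Set Filter ProbabilityTheory
open scoped ENNReal Topology

noncomputable section

/-- Markov's inequality for the power `p`. -/
lemma tail_mul_rpow_le (ρ : Measure ℝ) {p t : ℝ} (hp : 0 ≤ p) (ht : 0 < t) :
    ENNReal.ofReal (t ^ p) * ρ (Ioi t) ≤ ∫⁻ z in Ioi (0:ℝ), ENNReal.ofReal (z ^ p) ∂ρ := by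
  rw [← setLIntegral_const]
  refine (setLIntegral_mono' measurableSet_Ioi fun z hz => ?_).trans
    (lintegral_mono_set (Ioi_subset_Ioi ht.le))
  exact ENNReal.ofReal_le_ofReal (Real.rpow_le_rpow ht.le (le_of_lt hz) hp)

lemma setLIntegral_tail_le (ν ρ : Measure ℝ) {p b x : ℝ} (hp : 0 ≤ p) (hb : b ≤ 1) (hx : 0 < x) :
    ∫⁻ y in Ioc (0:ℝ) b, ρ (Ioi (x / y)) ∂ν ≤
      (∫⁻ z in Ioi (0:ℝ), ENNReal.ofReal (z ^ p) ∂ρ) *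
        (∫⁻ y in Ioc (0:ℝ) 1, ENNReal.ofReal (y ^ p) ∂ν) * ENNReal.ofReal (x ^ (-p)) := by
  set M := ∫⁻ z in Ioi (0:ℝ), ENNReal.ofReal (z ^ p) ∂ρ with hM
  have hmeas : Measurable fun y : ℝ => ENNReal.ofReal (y ^ p) := by fun_prop
  have key : ∀ y ∈ Ioc (0:ℝ) b,
      ρ (Ioi (x / y)) ≤ M * ENNReal.ofReal (x ^ (-p)) * ENNReal.ofReal (y ^ p) := by
    intro y hy
    have hy0 : 0 < y := hy.1
    have h := tail_mul_rpow_le ρ hp (div_pos hx hy0)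
    have hone : ENNReal.ofReal (x ^ (-p)) * ENNReal.ofReal (y ^ p) *
        ENNReal.ofReal ((x / y) ^ p) = 1 := by
      rw [← ENNReal.ofReal_mul (by positivity), ← ENNReal.ofReal_mul (by positivity),
        Real.div_rpow hx.le hy0.le, Real.rpow_neg hx.le]
      have := (Real.rpow_pos_of_pos hx p).ne'
      have := (Real.rpow_pos_of_pos hy0 p).ne'
      rw [← ENNReal.ofReal_one]
      congr 1
      field_simp
    calc ρ (Ioi (x / y)) = ENNReal.ofReal (x ^ (-p)) * ENNReal.ofReal (y ^ p) *
        (ENNReal.ofReal ((x / y) ^ p) * ρ (Ioi (x / y))) := by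
          rw [← mul_assoc, hone, one_mul]
      _ ≤ ENNReal.ofReal (x ^ (-p)) * ENNReal.ofReal (y ^ p) * M := by gcongr
      _ = _ := by ring
  calc ∫⁻ y in Ioc (0:ℝ) b, ρ (Ioi (x / y)) ∂ν
      ≤ ∫⁻ y in Ioc (0:ℝ) b, M * ENNReal.ofReal (x ^ (-p)) * ENNReal.ofReal (y ^ p) ∂ν :=
        setLIntegral_mono' measurableSet_Ioc key
    _ ≤ ∫⁻ y in Ioc (0:ℝ) 1, M * ENNReal.ofReal (x ^ (-p)) * ENNReal.ofReal (y ^ p) ∂ν :=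
        lintegral_mono_set (Ioc_subset_Ioc_right hb)
    _ = M * ENNReal.ofReal (x ^ (-p)) * ∫⁻ y in Ioc (0:ℝ) 1, ENNReal.ofReal (y ^ p) ∂ν :=
        lintegral_const_mul _ hmeas
    _ = _ := by ring

/-- A lower Potter-type bound: a regularly varying tail with exponent `α` eventually dominates
a multiple of `x ^ (-β)`, for every `β > α`. -/
lemma HasRegVarTail.exists_le_tail {μ : Measure ℝ} {α β : ℝ} (h : HasRegVarTail μ α)
    (hβ : 0 ≤ β) (hαβ : α < β) :
    ∃ c : ℝ, 0 < c ∧ ∀ᶠ x in atTop, c * x ^ (-β) ≤ (μ (Ioi x)).toReal := by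
  obtain ⟨L, hL, hpos, hμ⟩ := h
  set U : ℝ → ℝ := fun x => (μ (Ioi x)).toReal with hU
  have hanti : ∀ x y, 0 < x → x ≤ y → U y ≤ U x := fun x y hx hxy =>
    ENNReal.toReal_mono (by rw [hμ x hx]; exact ENNReal.ofReal_ne_top)
      (measure_mono (Ioi_subset_Ioi hxy))
  have hev : ∀ᶠ x in atTop, (2:ℝ) ^ (α - β) < L (2 * x) / L x :=
    (hL 2 two_pos).eventually (lt_mem_nhds
      (Real.rpow_lt_one_of_one_lt_of_neg one_lt_two (by linarith)))
  obtain ⟨X, hX⟩ := eventually_atTop.1 (hev.and (hpos.and (eventually_gt_atTop 0)))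
  have hX0 : 0 < X := (hX X le_rfl).2.2
  have hUeq : ∀ x, X ≤ x → U x = x ^ (-α) * L x := by
    intro x hx
    have h0 := (hX x hx).2
    rw [hU]
    simp only
    rw [hμ x h0.2, ENNReal.toReal_ofReal]
    exact mul_nonneg (Real.rpow_nonneg h0.2.le _) h0.1.le
  have hstep : ∀ x, X ≤ x → (2:ℝ) ^ (-β) * U x ≤ U (2 * x) := by
    intro x hx
    obtain ⟨h1, h2, h3⟩ := hX x hx
    rw [hUeq x hx, hUeq (2 * x) (by linarith), Real.mul_rpow two_pos.le h3.le]
    have h4 : (2:ℝ) ^ (α - β) * L x ≤ L (2 * x) := ((lt_div_iff₀ h2).1 h1).le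
    have h5 : (2:ℝ) ^ (-β) = 2 ^ (-α) * 2 ^ (α - β) := by
      rw [← Real.rpow_add two_pos]; congr 1; ring
    calc (2:ℝ) ^ (-β) * (x ^ (-α) * L x) = 2 ^ (-α) * x ^ (-α) * (2 ^ (α - β) * L x) := by
          rw [h5]; ring
      _ ≤ _ := by gcongr
  have hiter : ∀ n : ℕ, ((2:ℝ) ^ n) ^ (-β) * U X ≤ U (2 ^ n * X) := by
    intro n
    induction n with
    | zero => simp
    | succ n ih =>
      have hn : X ≤ 2 ^ n * X := le_mul_of_one_le_left hX0.le (one_le_pow₀ one_le_two)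
      calc ((2:ℝ) ^ (n + 1)) ^ (-β) * U X = 2 ^ (-β) * (((2:ℝ) ^ n) ^ (-β) * U X) := by
            rw [pow_succ, Real.mul_rpow (by positivity) two_pos.le]; ring
        _ ≤ 2 ^ (-β) * U (2 ^ n * X) := by gcongr
        _ ≤ U (2 * (2 ^ n * X)) := hstep _ hn
        _ = U (2 ^ (n + 1) * X) := by rw [pow_succ]; ring_nf
  have hUX : 0 < U X := by
    rw [hUeq X le_rfl]
    exact mul_pos (Real.rpow_pos_of_pos hX0 _) (hX X le_rfl).2.1
  refine ⟨(2 / X) ^ (-β) * U X, by positivity, ?_⟩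
  filter_upwards [eventually_ge_atTop X] with x hx
  have hx0 : 0 < x := hX0.trans_le hx
  -- compare `x` with the dyadic multiple `2 ^ (n + 1) * X` just above it
  obtain ⟨n, hn1, hn2⟩ := exists_nat_pow_near ((one_le_div hX0).2 hx) one_lt_two
  have hle : (2:ℝ) ^ (n + 1) ≤ 2 / X * x := by
    rw [pow_succ]
    calc (2:ℝ) ^ n * 2 ≤ x / X * 2 := by gcongr
      _ = _ := by ring
  calc (2 / X) ^ (-β) * U X * x ^ (-β) = (2 / X * x) ^ (-β) * U X := by
        rw [Real.mul_rpow (by positivity) hx0.le]; ring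
    _ ≤ ((2:ℝ) ^ (n + 1)) ^ (-β) * U X := by
        gcongr ?_ * _
        exact Real.rpow_le_rpow_of_nonpos (by positivity) hle (by linarith)
    _ ≤ U (2 ^ (n + 1) * X) := hiter _
    _ ≤ U x := hanti _ _ hx0 ((div_lt_iff₀ hX0).1 hn2).le

/-- Remark 2.4. If `∫₀^1 y^{α+δ} ν(dy) < ∞` with `0 < δ < α`
satisfying the moment condition for `ρ`, and `ν ⊛ ρ` has a regularly varying tail with
exponent `α`, then condition (2.18) holds; in fact for every `b ∈ (0,1)` there is a
constant `C` with `∫₀^b ρ(x/y,∞) ν(dy) ≤ C x^{-(α+δ)}` for all `x > 1`. -/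
theorem cond218_of_small_left_tail
    (α δ : ℝ) (hα : 0 < α) (hδ : 0 < δ) (hδα : δ < α)
    (ρ : Measure ℝ) [SigmaFinite ρ] (hρ : ρ ≠ 0) (hρsupp : ρ (Iic 0) = 0)
    (hmom : MomentCond ρ α δ)
    (ν : Measure ℝ) [SigmaFinite ν] (hνsupp : ν (Iic 0) = 0)
    (hν1 : ∫⁻ y in Ioc (0:ℝ) 1, ENNReal.ofReal (y ^ (α + δ)) ∂ν < ⊤)
    (hRV : HasRegVarTail (mulConv ν ρ) α) :
    Cond218 ν ρ ∧
      ∀ b : ℝ, b ∈ Ioo (0:ℝ) 1 → ∃ C : ℝ, ∀ x : ℝ, 1 < x →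
        (∫⁻ y in Ioc (0:ℝ) b, ρ (Ioi (x / y)) ∂ν).toReal ≤ C * x ^ (-(α + δ)) := by
  set M := ∫⁻ z in Ioi (0:ℝ), ENNReal.ofReal (z ^ (α + δ)) ∂ρ with hM
  set N := ∫⁻ y in Ioc (0:ℝ) 1, ENNReal.ofReal (y ^ (α + δ)) ∂ν with hN
  have hMtop : M < ⊤ := lt_of_le_of_lt
    (lintegral_mono fun y => ENNReal.ofReal_le_ofReal (le_max_right _ _)) hmom
  have hbound : ∀ b ≤ (1:ℝ), ∀ x : ℝ, 0 < x →
      (∫⁻ y in Ioc (0:ℝ) b, ρ (Ioi (x / y)) ∂ν).toReal ≤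
        (M * N).toReal * x ^ (-(α + δ)) := by
    intro b hb x hx
    have h := setLIntegral_tail_le ν ρ (p := α + δ) (by linarith) hb hx
    have h2 := ENNReal.toReal_mono
      (ENNReal.mul_ne_top (ENNReal.mul_ne_top hMtop.ne hν1.ne) ENNReal.ofReal_ne_top) h
    rwa [ENNReal.toReal_mul, ENNReal.toReal_ofReal (by positivity)] at h2
  refine ⟨?_, fun b hb => ⟨(M * N).toReal, fun x hx => hbound b hb.2.le x (by linarith)⟩⟩
  obtain ⟨c, hc, hlow⟩ := hRV.exists_le_tail (β := α + δ / 2) (by linarith) (by linarith)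
  have hlim : ∀ b ≤ (1:ℝ), Tendsto (fun x : ℝ =>
      (∫⁻ y in Ioc (0:ℝ) b, ρ (Ioi (x / y)) ∂ν).toReal
        / ((mulConv ν ρ) (Ioi x)).toReal) atTop (𝓝 0) := by
    intro b hb
    have hdec : Tendsto (fun x : ℝ => (M * N).toReal / c * x ^ (-(δ / 2))) atTop (𝓝 0) := by
      simpa using (tendsto_rpow_neg_atTop (half_pos hδ)).const_mul ((M * N).toReal / c)
    refine squeeze_zero' (Eventually.of_forall fun x => by positivity) ?_ hdec
    filter_upwards [hlow, eventually_gt_atTop 0] with x hx hx0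
    have hxβ : 0 < x ^ (-(α + δ / 2)) := Real.rpow_pos_of_pos hx0 _
    calc _ ≤ (M * N).toReal * x ^ (-(α + δ)) / (c * x ^ (-(α + δ / 2))) :=
          div_le_div₀ (by positivity) (hbound b hb x hx0) (by positivity) hx
      _ = (M * N).toReal / c * x ^ (-(δ / 2)) := by
          have : x ^ (-(α + δ)) = x ^ (-(δ / 2)) * x ^ (-(α + δ / 2)) := by
            rw [← Real.rpow_add hx0]; congr 1; ring
          rw [this]
          field_simp
  refine tendsto_const_nhds.congr' ?_
  filter_upwards [mem_nhdsWithin_of_mem_nhds (Iic_mem_nhds (zero_lt_one' ℝ))] with b hb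
  exact (hlim b hb).limsup_eq.symm
end
end

section
/- Let α > 0. (i) If Y is a positive α-regular variation determining random variable and β > 0, then Y^β is (α/β)-regular variation determining. (ii) If Y₁ and Y₂ are independent positive α-regular variation determining random variables, then the product Y₁Y₂ is α-regular variation determining. -/
/-!
For independent `Y` and `Z` the law of `Y * Z` is the multiplicative convolution of their laws, so
`RVDetRV α ν` is a property of laws only: whenever `ζ` is a probability measure and `ν ∗ₘ ζ` has a
regularly varying tail, so does `ζ` (`rvDetRV_iff_mconv`).

* Powers: for `y > 0` and `x > 0`, `y ^ β * z > x ^ β` if and only if `y * z₊ ^ (1 / β) > x`, where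
  `z₊ = max z 0`. Hence both the product and the factor for `Y ^ β` are turned into those for `Y` by
  the substitution `x ↦ x ^ β` in the tails, which multiplies the exponent of regular variation
  by `β` (`HasRegVarTail.of_tail_rpow`).
* Products: convolution is associative, so from `(ν₁ ∗ₘ ν₂) ∗ₘ ζ = ν₁ ∗ₘ (ν₂ ∗ₘ ζ)` the determining
  property of `ν₁` gives regular variation of `ν₂ ∗ₘ ζ`, and then that of `ν₂` gives it for `ζ`.
-/

open MeasureTheory Set Filter ProbabilityTheory
open scoped ENNReal Topology

noncomputable section

/-- A law `ν` on `(0,∞)` (the law of a positive random variable `Y`) is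
`α`-regular variation determining: for every random variable `Z` independent of `Y`,
regular variation with exponent `α` of the product `X = Y Z` implies that `Z` is
regularly varying with exponent `α`. -/
def RVDetRV (α : ℝ) (ν : Measure ℝ) : Prop :=
  ∀ (Ω : Type) [MeasurableSpace Ω] (P : Measure Ω) [IsProbabilityMeasure P]
    (Y Z : Ω → ℝ), Measurable Y → Measurable Z → P.map Y = ν →
    IndepFun Y Z P →
    HasRegVarTail (P.map (fun ω => Y ω * Z ω)) α → HasRegVarTail (P.map Z) α

/-- Regular variation determination expressed through laws: the random variables in the definition
can be realised as the coordinates of a product space. -/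
theorem rvDetRV_iff_mconv (α : ℝ) (ν : Measure ℝ) [IsProbabilityMeasure ν] :
    RVDetRV α ν ↔ ∀ ζ : Measure ℝ, IsProbabilityMeasure ζ →
      HasRegVarTail (ν.mconv ζ) α → HasRegVarTail ζ α := by
  constructor
  · intro h ζ _ hζ
    have := h (ℝ × ℝ) (ν.prod ζ) Prod.fst Prod.snd measurable_fst measurable_snd
      Measure.fst_prod (indepFun_prod measurable_id measurable_id) hζ
    rwa [show (ν.prod ζ).map Prod.snd = ζ from Measure.snd_prod] at this
  · intro h Ω _ P _ Y Z hY hZ hν hYZ hX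
    refine h _ (Measure.isProbabilityMeasure_map hZ.aemeasurable) ?_
    rw [← hν, ← hYZ.map_mul_eq_map_mconv_map hY hZ]
    exact hX

/-- Substituting a power in the argument of the tail multiplies the exponent of regular variation
by that power. -/
theorem HasRegVarTail.of_tail_rpow {μ μ' : Measure ℝ} {α γ : ℝ} (h : HasRegVarTail μ α)
    (hγ : 0 < γ) (hμ : ∀ x : ℝ, 0 < x → μ' (Ioi x) = μ (Ioi (x ^ γ))) :
    HasRegVarTail μ' (γ * α) := by
  obtain ⟨L, hL, hpos, htail⟩ := h
  refine ⟨fun x => L (x ^ γ), ?_, (tendsto_rpow_atTop hγ).eventually hpos, ?_⟩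
  · intro c hc
    refine ((hL (c ^ γ) (Real.rpow_pos_of_pos hc γ)).comp (tendsto_rpow_atTop hγ)).congr' ?_
    filter_upwards [eventually_gt_atTop 0] with x hx
    simp only [Function.comp_apply]
    rw [Real.mul_rpow hc.le hx.le]
  · intro x hx
    rw [hμ x hx, htail _ (Real.rpow_pos_of_pos hx γ), ← Real.rpow_mul hx.le, mul_neg]

theorem lt_rpow_inv_max_iff {β x w : ℝ} (hβ : 0 < β) (hx : 0 < x) :
    x < max w 0 ^ β⁻¹ ↔ x ^ β < w := by
  rw [Real.lt_rpow_inv_iff_of_pos hx.le (le_max_right w 0) hβ, lt_max_iff]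
  exact or_iff_left (Real.rpow_pos_of_pos hx β).le.not_gt

/-- The determining property passes to powers, stated for laws. -/
theorem RVDetRV.map_rpow {α β : ℝ} {ν : Measure ℝ} [IsProbabilityMeasure ν]
    (hβ : 0 < β) (hν : ∀ᵐ y ∂ν, 0 < y) (h : RVDetRV α ν) :
    RVDetRV (α / β) (ν.map fun y => y ^ β) := by
  have hm : Measurable fun y : ℝ => y ^ β := by fun_prop
  have hg : Measurable fun z : ℝ => max z 0 ^ β⁻¹ := by fun_prop
  have := Measure.isProbabilityMeasure_map (μ := ν) hm.aemeasurable
  rw [rvDetRV_iff_mconv] at h ⊢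
  intro ζ _ hζ
  have hζ' : HasRegVarTail (ζ.map fun z => max z 0 ^ β⁻¹) α := by
    refine h _ (Measure.isProbabilityMeasure_map hg.aemeasurable) ?_
    have key := hζ.of_tail_rpow (μ' := ν.mconv (ζ.map fun z => max z 0 ^ β⁻¹)) hβ ?_
    · rwa [mul_div_cancel₀ α hβ.ne'] at key
    · intro x hx
      have e₁ : ν.prod (ζ.map fun z => max z 0 ^ β⁻¹) =
          (ν.prod ζ).map (Prod.map id fun z => max z 0 ^ β⁻¹) := by
        rw [← Measure.map_prod_map ν ζ measurable_id hg, Measure.map_id]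
      have e₂ : (ν.map fun y => y ^ β).prod ζ =
          (ν.prod ζ).map (Prod.map (fun y => y ^ β) id) := by
        rw [← Measure.map_prod_map ν ζ hm measurable_id, Measure.map_id]
      rw [Measure.mconv, Measure.mconv, e₁, e₂,
        Measure.map_map (by fun_prop) (by fun_prop), Measure.map_map (by fun_prop) (by fun_prop),
        Measure.map_apply (by fun_prop) measurableSet_Ioi,
        Measure.map_apply (by fun_prop) measurableSet_Ioi]
      refine measure_congr ?_
      filter_upwards [Measure.quasiMeasurePreserving_fst.ae hν] with p hp
      -- `y * z₊ ^ (1 / β) = (y ^ β * z)₊ ^ (1 / β)` for `y > 0`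
      have e : p.1 * max p.2 0 ^ β⁻¹ = max (p.1 ^ β * p.2) 0 ^ β⁻¹ := by
        have hp' := Real.rpow_nonneg hp.le β
        rw [show max (p.1 ^ β * p.2) 0 = p.1 ^ β * max p.2 0 by
            rw [mul_max_of_nonneg _ _ hp', mul_zero],
          Real.mul_rpow hp' (le_max_right _ _), Real.rpow_rpow_inv hp.le hβ.ne']
      refine propext ?_
      change x < p.1 * max p.2 0 ^ β⁻¹ ↔ x ^ β < p.1 ^ β * p.2
      rw [e, lt_rpow_inv_max_iff hβ hx]
  have key := hζ'.of_tail_rpow (μ' := ζ) (inv_pos.2 hβ) fun x hx => ?_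
  · rwa [inv_mul_eq_div] at key
  · rw [Measure.map_apply hg measurableSet_Ioi]
    congr 1
    ext z
    change x < z ↔ x ^ β⁻¹ < max z 0 ^ β⁻¹
    rw [lt_rpow_inv_max_iff hβ (Real.rpow_pos_of_pos hx _), Real.rpow_inv_rpow hx.le hβ.ne']

/-- Lemma 4.1. (i) If `Y` is a positive `α`-regular variation
determining random variable and `β > 0`, then `Y^β` is `(α/β)`-regular variation
determining. (ii) If `Y₁` and `Y₂` are independent positive `α`-regular variation
determining random variables, then so is `Y₁ Y₂`. -/
theorem rvDetRV_rpow_and_mul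
    (α : ℝ) (hα : 0 < α) :
    (∀ β : ℝ, 0 < β →
      ∀ (Ω : Type) [MeasurableSpace Ω] (P : Measure Ω), IsProbabilityMeasure P →
        ∀ Y : Ω → ℝ, Measurable Y → (∀ ω, 0 < Y ω) →
          (∃ δ : ℝ, 0 < δ ∧ ∫⁻ ω, ENNReal.ofReal (Y ω ^ (α + δ)) ∂P < ⊤) →
          RVDetRV α (P.map Y) → RVDetRV (α / β) (P.map (fun ω => Y ω ^ β)))
    ∧
    (∀ (Ω : Type) [MeasurableSpace Ω] (P : Measure Ω), IsProbabilityMeasure P →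
      ∀ Y₁ Y₂ : Ω → ℝ, Measurable Y₁ → Measurable Y₂ →
        (∀ ω, 0 < Y₁ ω) → (∀ ω, 0 < Y₂ ω) →
        (∃ δ : ℝ, 0 < δ ∧ ∫⁻ ω, ENNReal.ofReal (Y₁ ω ^ (α + δ)) ∂P < ⊤) →
        (∃ δ : ℝ, 0 < δ ∧ ∫⁻ ω, ENNReal.ofReal (Y₂ ω ^ (α + δ)) ∂P < ⊤) →
        IndepFun Y₁ Y₂ P →
        RVDetRV α (P.map Y₁) → RVDetRV α (P.map Y₂) →
        RVDetRV α (P.map (fun ω => Y₁ ω * Y₂ ω))) := by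
  constructor
  · intro β hβ Ω _ P _ Y hY hpos _ h
    have := Measure.isProbabilityMeasure_map (μ := P) hY.aemeasurable
    have hν : ∀ᵐ y ∂P.map Y, 0 < y :=
      (ae_map_iff hY.aemeasurable measurableSet_Ioi).2 (Eventually.of_forall hpos)
    have key := h.map_rpow hβ hν
    rwa [Measure.map_map (by fun_prop) hY] at key
  · intro Ω _ P _ Y₁ Y₂ hY₁ hY₂ _ _ _ _ hind h₁ h₂
    have := Measure.isProbabilityMeasure_map (μ := P) hY₁.aemeasurable
    have := Measure.isProbabilityMeasure_map (μ := P) hY₂.aemeasurable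
    rw [rvDetRV_iff_mconv] at h₁ h₂
    rw [show P.map (fun ω => Y₁ ω * Y₂ ω) = (P.map Y₁).mconv (P.map Y₂) from
      hind.map_mul_eq_map_mconv_map hY₁ hY₂, rvDetRV_iff_mconv]
    intro ζ _ hζ
    rw [Measure.mconv_assoc] at hζ
    exact h₂ ζ inferInstance (h₁ _ inferInstance hζ)
end
end
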